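/- There exist absolute constants c > 0 and C > 0 such that the following holds for all sufficiently large N. Let A ⊆ [N] be a set with no non-zero square differences, of density α = |A|/N ≥ N^{-1/3}, and let g = 1_A − α·1_{[N]}. Then there exist reals B, Q, K with c·α^C ≤ B, Q, K ≤ C·α^{−C} and a set 𝓑 ⊆ Q_{≤Q} such that: (1) for each a/q ∈ 𝓑 there exists γ_{a/q} ∈ (0,1] with ‖γ_{a/q} − a/q‖ ≤ C·α^{−C}/N, and Σ_{a/q ∈ 𝓑} |1̂_A(γ_{a/q})| ≥ c·B·|A|·Q^{1/2}/(log(1/α))²; and (2) for each a/q ∈ 𝓑 (in lowest terms), ∫_{𝔐(a/q; N, K)} |ĝ(γ)|² dγ ≥ c·α·|A|/B². -/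

import Mathlib

open MeasureTheory

/-- `A` has no non-zero square differences. -/
def NoSquareDiff (A : Finset ℕ) : Prop :=
  ∀ a ∈ A, ∀ b ∈ A, ∀ n : ℕ, 0 < n → a ≠ b + n ^ 2

/-- `e(x) = e^{2πix}`. -/
noncomputable def eu (x : ℝ) : ℂ := Complex.exp (2 * Real.pi * Complex.I * x)

/-- The Fourier transform of the indicator of `A`: `1̂_A(γ) = ∑_{a ∈ A} e(aγ)`. -/
noncomputable def hatInd (A : Finset ℕ) (γ : ℝ) : ℂ := ∑ a ∈ A, eu (a * γ)

/-- The major arc around the reduced rational `x`: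
`𝔐(x; N, K) = {γ ∈ (0,1] : ‖γ - x‖ ≤ K/(x.den · N)}`, where `‖·‖` is the distance to the
nearest integer. -/
def majorArcQ (x : ℚ) (N : ℕ) (K : ℝ) : Set ℝ :=
  {γ ∈ Set.Ioc (0 : ℝ) 1 | |γ - (x : ℝ) - round (γ - (x : ℝ))| ≤ K / (x.den * N)}

/-! ### The additive character -/

lemma eu_eq (x : ℝ) : eu x = Complex.exp (Complex.I * ((2 * Real.pi * x : ℝ) : ℂ)) := by
  unfold eu; congr 1; push_cast; ring

lemma eu_add (x y : ℝ) : eu (x + y) = eu x * eu y := by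
  unfold eu; rw [← Complex.exp_add]; congr 1; push_cast; ring

lemma eu_zero : eu 0 = 1 := by simp [eu]

lemma norm_eu (x : ℝ) : ‖eu x‖ = 1 := by
  rw [eu_eq, mul_comm]; exact Complex.norm_exp_ofReal_mul_I _

lemma eu_int (k : ℤ) : eu k = 1 := by
  rw [eu, Complex.exp_eq_one_iff]; exact ⟨k, by push_cast; ring⟩

lemma eu_add_int (x : ℝ) (k : ℤ) : eu (x + k) = eu x := by rw [eu_add, eu_int, mul_one]

lemma conj_eu (x : ℝ) : (starRingEnd ℂ) (eu x) = eu (-x) := by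
  rw [eu_eq, eu_eq, ← Complex.exp_conj, map_mul, Complex.conj_I, Complex.conj_ofReal]
  congr 1; push_cast; ring

lemma continuous_eu : Continuous eu := by unfold eu; fun_prop

lemma eu_nat_mul (n : ℕ) (x : ℝ) : eu (n * x) = eu x ^ n := by
  unfold eu; rw [← Complex.exp_nat_mul]; congr 1; push_cast; ring

lemma norm_eu_sub_one_le (x : ℝ) : ‖eu x - 1‖ ≤ 2 * Real.pi * |x| := by
  rw [eu_eq]
  refine Real.norm_exp_I_mul_ofReal_sub_one_le.trans (le_of_eq ?_)
  rw [Real.norm_eq_abs, abs_mul, abs_of_pos Real.two_pi_pos]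

lemma norm_eu_sub_eu_le (x y : ℝ) : ‖eu x - eu y‖ ≤ 2 * Real.pi * |x - y| := by
  have h : eu x - eu y = eu y * (eu (x - y) - 1) := by
    rw [mul_sub, ← eu_add]; simp
  rw [h, norm_mul, norm_eu, one_mul]
  exact norm_eu_sub_one_le _

/-- `4 ‖x‖ ≤ |e(x) - 1|`, with `‖x‖` the distance to the nearest integer. -/
lemma four_mul_dist_le_norm_eu_sub_one (x : ℝ) : 4 * |x - round x| ≤ ‖eu x - 1‖ := by
  have h : eu x = eu (x - round x) := by
    have := eu_add_int (x - round x) (round x)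
    rw [sub_add_cancel] at this; exact this
  have hr := abs_sub_round x
  set t := x - round x
  rw [h, eu_eq, Complex.norm_exp_I_mul_ofReal_sub_one, Real.norm_eq_abs, abs_mul, abs_two]
  have hpi := Real.pi_pos
  have h1 : |2 * Real.pi * t / 2| = Real.pi * |t| := by
    rw [show 2 * Real.pi * t / 2 = Real.pi * t by ring, abs_mul, abs_of_pos hpi]
  have h2 := Real.mul_abs_le_abs_sin (x := 2 * Real.pi * t / 2) (by rw [h1]; nlinarith)
  rw [h1] at h2
  have h3 : 2 / Real.pi * (Real.pi * |t|) = 2 * |t| := by field_simp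
  linarith

lemma norm_geom_sum_eu_le (θ : ℝ) (n : ℕ) {δ : ℝ} (hδ : 0 < δ) (h : δ ≤ |θ - round θ|) :
    ‖∑ m ∈ Finset.range n, eu θ ^ m‖ ≤ 1 / (2 * δ) := by
  have h1 := four_mul_dist_le_norm_eu_sub_one θ
  have h2 : (∑ m ∈ Finset.range n, eu θ ^ m) * (eu θ - 1) = eu θ ^ n - 1 := geom_sum_mul _ _
  have h3 : ‖eu θ ^ n - 1‖ ≤ 2 := by
    refine (norm_sub_le _ _).trans ?_
    rw [norm_pow, norm_eu]; norm_num
  rw [← h2, norm_mul] at h3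
  rw [le_div_iff₀ (by positivity)]
  nlinarith [norm_nonneg (∑ m ∈ Finset.range n, eu θ ^ m)]

/-! ### Summation by parts and differencing -/

lemma norm_sum_mul_le_of_partial_sums (f ψ : ℕ → ℂ) (n : ℕ) {S F V : ℝ} (hS : 0 ≤ S)
    (hψ : ∀ m ≤ n, ‖∑ i ∈ Finset.range m, ψ i‖ ≤ S) (hF : ‖f (n - 1)‖ ≤ F)
    (hV : ∀ i, i + 1 < n → ‖f (i + 1) - f i‖ ≤ V) (hV0 : 0 ≤ V) :
    ‖∑ i ∈ Finset.range n, f i * ψ i‖ ≤ S * (F + n * V) := by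
  have h := Finset.sum_range_by_parts f ψ n
  simp only [smul_eq_mul] at h
  rw [h]
  refine (norm_sub_le _ _).trans ?_
  have h1 : ‖f (n - 1) * ∑ i ∈ Finset.range n, ψ i‖ ≤ F * S := by
    rw [norm_mul]
    exact mul_le_mul hF (hψ n le_rfl) (norm_nonneg _) ((norm_nonneg _).trans hF)
  have h2 : ‖∑ i ∈ Finset.range (n - 1), (f (i + 1) - f i) * ∑ j ∈ Finset.range (i + 1), ψ j‖
      ≤ n * (V * S) := by
    refine (norm_sum_le_of_le (n := fun _ => V * S) _ fun i hi => ?_).trans ?_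
    · have := Finset.mem_range.1 hi
      rw [norm_mul]
      exact mul_le_mul (hV i (by omega)) (hψ _ (by omega)) (norm_nonneg _) hV0
    · rw [Finset.sum_const, Finset.card_range, nsmul_eq_mul]
      have : ((n - 1 : ℕ) : ℝ) ≤ n := by exact_mod_cast Nat.sub_le _ _
      exact mul_le_mul_of_nonneg_right this (by positivity)
  linarith

lemma norm_sum_sq_le_sum_differences (f : ℕ → ℂ) (n : ℕ) :
    ‖∑ i ∈ Finset.range n, f i‖ ^ 2 ≤ 2 * ∑ h ∈ Finset.range n,
      ‖∑ m ∈ Finset.range (n - h), f (h + m) * (starRingEnd ℂ) (f m)‖ := by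
  have key : ∀ k : ℕ, ‖∑ i ∈ Finset.range k, f i‖ ^ 2 ≤ 2 * (∑ i ∈ Finset.range k,
      f i * (starRingEnd ℂ) (∑ j ∈ Finset.range (i + 1), f j)).re := by
    intro k
    induction k with
    | zero => simp
    | succ k ih =>
      rw [Finset.sum_range_succ, Finset.sum_range_succ, Finset.sum_range_succ]
      set S := ∑ i ∈ Finset.range k, f i
      rw [← Complex.normSq_eq_norm_sq] at ih ⊢
      simp only [Complex.normSq_apply, Complex.add_re, Complex.add_im, Complex.mul_re,
        Complex.conj_re, Complex.conj_im] at ih ⊢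
      nlinarith [sq_nonneg (f k).re, sq_nonneg (f k).im]
  have flip : (∑ i ∈ Finset.range n, f i * (starRingEnd ℂ) (∑ j ∈ Finset.range (i + 1), f j)) =
      ∑ h ∈ Finset.range n, ∑ m ∈ Finset.range (n - h), f (h + m) * (starRingEnd ℂ) (f m) := by
    rw [← Finset.sum_range_diag_flip n fun h m => f (h + m) * (starRingEnd ℂ) (f m)]
    refine Finset.sum_congr rfl fun i _ => ?_
    rw [← Finset.sum_range_reflect f, map_sum, Finset.mul_sum]
    refine Finset.sum_congr rfl fun j hj => ?_
    have := Finset.mem_range.1 hj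
    rw [Nat.add_sub_cancel, Nat.add_sub_cancel' (by omega)]
  refine (key n).trans ?_
  rw [flip]
  gcongr
  exact (Complex.re_le_norm _).trans (norm_sum_le _ _)

/-! ### Pigeonhole -/

lemma exists_pair_of_card_lt {M Y t : ℕ} (hY : 0 < Y) {D : Finset ℕ} (hD : D ⊆ Finset.range M)
    (h : (M / Y + 1) * t < D.card) : ∃ a ∈ D, ∃ b ∈ D, a + t ≤ b ∧ b < a + Y := by
  obtain ⟨y, -, hy⟩ := Finset.exists_lt_card_fiber_of_mul_lt_card_of_maps_to
    (s := D) (t := Finset.range (M / Y + 1)) (f := fun h => h / Y) (n := t)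
    (fun a ha => by
      have := Finset.mem_range.1 (hD ha)
      exact Finset.mem_range.2 (Nat.lt_succ_of_le (Nat.div_le_div_right this.le)))
    (by rwa [Finset.card_range])
  set F := D.filter fun x => x / Y = y
  have hne : F.Nonempty := Finset.card_pos.1 (by omega)
  set a := F.min' hne
  have ha : a ∈ F := F.min'_mem hne
  have : ∃ b ∈ F, a + t ≤ b := by
    by_contra! hcon
    have hsub : F ⊆ Finset.Ico a (a + t) := fun b hb =>
      Finset.mem_Ico.2 ⟨F.min'_le b hb, hcon b hb⟩
    have := Finset.card_le_card hsub
    rw [Nat.card_Ico] at this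
    omega
  obtain ⟨b, hb, hab⟩ := this
  obtain ⟨ha1, ha2⟩ := Finset.mem_filter.1 ha
  obtain ⟨hb1, hb2⟩ := Finset.mem_filter.1 hb
  refine ⟨a, ha1, b, hb1, hab, ?_⟩
  have e1 := Nat.div_add_mod a Y
  have e2 := Nat.div_add_mod b Y
  rw [ha2] at e1
  rw [hb2] at e2
  have := Nat.mod_lt b hY
  omega

/-! ### Quadratic Gauss sums -/

lemma card_two_mul_eq_zero_le (q : ℕ) [NeZero q] :
    (Finset.univ.filter fun h : ZMod q => 2 * h = 0).card ≤ 2 := by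
  have hsub : (Finset.univ.filter fun h : ZMod q => 2 * h = 0) ⊆
      ({0, ((q / 2 : ℕ) : ZMod q)} : Finset (ZMod q)) := by
    intro h hh
    have h2 := (Finset.mem_filter.1 hh).2
    have hlt := ZMod.val_lt h
    have hdvd : q ∣ 2 * h.val := by
      rw [← ZMod.natCast_eq_zero_iff]
      push_cast
      rw [ZMod.natCast_zmod_val, h2]
    obtain ⟨k, hk⟩ := hdvd
    have hk2 : k < 2 := by
      by_contra! hc
      nlinarith
    rw [Finset.mem_insert, Finset.mem_singleton]
    interval_cases k
    · left
      rw [← ZMod.val_eq_zero]; omega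
    · right
      rw [← ZMod.natCast_zmod_val h]; congr 1; omega
  exact (Finset.card_le_card hsub).trans Finset.card_le_two

lemma norm_gaussSum_sq_le (q : ℕ) [NeZero q] (a : ZMod q) (ha : IsUnit a) :
    ‖∑ r : ZMod q, ZMod.stdAddChar (a * r ^ 2)‖ ^ 2 ≤ 2 * q := by
  classical
  set ψ := ZMod.stdAddChar (N := q)
  have hψ : ∀ x, (starRingEnd ℂ) (ψ x) = ψ (-x) := fun x => (AddChar.map_neg_eq_conj ψ x).symm
  have h1 : ((‖∑ r : ZMod q, ψ (a * r ^ 2)‖ ^ 2 : ℝ) : ℂ) =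
      ∑ h : ZMod q, ψ (a * h ^ 2) * ((if 2 * a * h = 0 then q else 0 : ℕ) : ℂ) := by
    have e1 : ((‖∑ r : ZMod q, ψ (a * r ^ 2)‖ ^ 2 : ℝ) : ℂ) =
        ∑ s : ZMod q, ∑ r : ZMod q, ψ (a * r ^ 2) * ψ (-(a * s ^ 2)) := by
      push_cast
      rw [← Complex.mul_conj', map_sum, Finset.sum_mul_sum, Finset.sum_comm]
      simp only [hψ]
    have e2 : ∀ s : ZMod q, ∑ r : ZMod q, ψ (a * r ^ 2) * ψ (-(a * s ^ 2)) =
        ∑ h : ZMod q, ψ (a * h ^ 2) * ψ (s * (2 * a * h)) := by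
      intro s
      rw [← Equiv.sum_comp (Equiv.addRight s)]
      refine Finset.sum_congr rfl fun h _ => ?_
      rw [← AddChar.map_add_eq_mul, ← AddChar.map_add_eq_mul]
      congr 1
      simp only [Equiv.coe_addRight]; ring
    rw [e1, Finset.sum_congr rfl fun s _ => e2 s, Finset.sum_comm]
    refine Finset.sum_congr rfl fun h _ => ?_
    rw [← Finset.mul_sum, AddChar.sum_mulShift _ (ZMod.isPrimitive_stdAddChar q), ZMod.card]
  have h2 : ‖((‖∑ r : ZMod q, ψ (a * r ^ 2)‖ ^ 2 : ℝ) : ℂ)‖ ≤ 2 * q := by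
    rw [h1]
    refine (norm_sum_le _ _).trans ?_
    have e3 : ∀ h : ZMod q, ‖ψ (a * h ^ 2) * ((if 2 * a * h = 0 then q else 0 : ℕ) : ℂ)‖ =
        if 2 * h = 0 then (q : ℝ) else 0 := by
      intro h
      rw [norm_mul, AddChar.norm_apply, one_mul]
      have : 2 * a * h = 0 ↔ 2 * h = 0 := by
        rw [show 2 * a * h = a * (2 * h) by ring, ha.mul_right_eq_zero]
      simp only [this]
      split_ifs <;> simp
    rw [Finset.sum_congr rfl fun h _ => e3 h, ← Finset.sum_filter, Finset.sum_const, nsmul_eq_mul]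
    have := card_two_mul_eq_zero_le q
    have : ((Finset.univ.filter fun h : ZMod q => 2 * h = 0).card : ℝ) ≤ 2 := by exact_mod_cast this
    gcongr
  rwa [Complex.norm_real, Real.norm_of_nonneg (by positivity)] at h2

lemma norm_sum_eu_sq_le (x : ℚ) :
    ‖∑ r ∈ Finset.range x.den, eu (((r : ℝ) + 1) ^ 2 * x)‖ ^ 2 ≤ 2 * x.den := by
  have : NeZero x.den := ⟨x.den_nz⟩
  have hunit : IsUnit ((x.num : ℤ) : ZMod x.den) := by
    rw [ZMod.coe_int_isUnit_iff_isCoprime, isCoprime_comm]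
    exact x.isCoprime_num_den
  have e1 : ∀ r : ℕ, eu (((r : ℝ) + 1) ^ 2 * x) =
      ZMod.stdAddChar (((x.num : ℤ) : ZMod x.den) * ((r : ZMod x.den) + 1) ^ 2) := by
    intro r
    have := ZMod.stdAddChar_coe (N := x.den) (x.num * ((r : ℤ) + 1) ^ 2)
    push_cast at this
    rw [this, eu]
    congr 1
    have hx : (x : ℝ) = x.num / x.den := by exact_mod_cast (Rat.num_div_den x).symm
    rw [hx]; push_cast; ring
  have e2 : ∑ r ∈ Finset.range x.den, eu (((r : ℝ) + 1) ^ 2 * x) =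
      ∑ r : ZMod x.den, ZMod.stdAddChar (((x.num : ℤ) : ZMod x.den) * r ^ 2) := by
    rw [← Equiv.sum_comp (Equiv.addRight (1 : ZMod x.den))]
    refine Finset.sum_bij' (fun r _ => (r : ZMod x.den)) (fun s _ => s.val) ?_ ?_ ?_ ?_ ?_
    · simp
    · intro s _; exact Finset.mem_range.2 (ZMod.val_lt s)
    · intro r hr; exact ZMod.val_cast_of_lt (Finset.mem_range.1 hr)
    · intro s _; exact ZMod.natCast_zmod_val s
    · intro r _; exact e1 r
  rw [e2]
  exact norm_gaussSum_sq_le _ _ hunit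

/-! ### Weighted exponential sums over squares -/

/-- The weighted Weyl sum `∑_{n ≤ M} (2n - 1) e(n²γ)`. -/
noncomputable def sqW (M : ℕ) (γ : ℝ) : ℂ :=
  ∑ j ∈ Finset.range M, (2 * (j : ℂ) + 1) * eu (((j : ℝ) + 1) ^ 2 * γ)

lemma norm_two_mul_add_one (j : ℕ) : ‖2 * (j : ℂ) + 1‖ = 2 * j + 1 := by
  have : 2 * (j : ℂ) + 1 = ((2 * j + 1 : ℕ) : ℂ) := by push_cast; ring
  rw [this, Complex.norm_natCast]; push_cast; ring

lemma sum_range_two_mul_add_one (M : ℕ) :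
    ∑ j ∈ Finset.range M, (2 * (j : ℝ) + 1) = (M : ℝ) ^ 2 := by
  induction M with
  | zero => simp
  | succ M ih => rw [Finset.sum_range_succ, ih]; push_cast; ring

lemma norm_sqW_le (M : ℕ) (γ : ℝ) : ‖sqW M γ‖ ≤ (M : ℝ) ^ 2 := by
  rw [← sum_range_two_mul_add_one]
  refine norm_sum_le_of_le _ fun j _ => ?_
  rw [norm_mul, norm_eu, mul_one, norm_two_mul_add_one]

lemma sqW_add_int (M : ℕ) (γ : ℝ) (k : ℤ) : sqW M (γ + k) = sqW M γ := by
  refine Finset.sum_congr rfl fun j _ => ?_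
  have : ((j : ℝ) + 1) ^ 2 * (γ + k) = ((j : ℝ) + 1) ^ 2 * γ + (((j + 1 : ℤ) ^ 2 * k : ℤ) : ℝ) := by
    push_cast; ring
  rw [this, eu_add_int]

lemma continuous_sqW (M : ℕ) : Continuous (sqW M) := by
  unfold sqW
  have := continuous_eu
  fun_prop

lemma norm_sqW_mul_le (M : ℕ) (β : ℝ) (hβ : 4 * Real.pi * M * |β| ≤ 1) :
    2 * Real.pi * |β| * ‖sqW M β‖ ≤ 2 + 16 * Real.pi ^ 2 * β ^ 2 * M ^ 3 := by
  set z : ℕ → ℂ := fun j => -(2 * Real.pi * Complex.I * ((2 * j + 1) * β)) with hz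
  have hzn : ∀ j ∈ Finset.range M, ‖z j‖ ≤ 4 * Real.pi * M * |β| := by
    intro j hj
    have h1 : (j : ℝ) + 1 ≤ M := by exact_mod_cast Finset.mem_range.1 hj
    simp only [hz, norm_neg, norm_mul, Complex.norm_ofNat, Complex.norm_real, Complex.norm_I,
      mul_one, Real.norm_eq_abs, abs_of_pos Real.pi_pos, norm_two_mul_add_one]
    have := mul_nonneg Real.pi_pos.le (abs_nonneg β)
    nlinarith
  have hstep : ∀ j : ℕ, eu (((j + 1 : ℕ) : ℝ) ^ 2 * β) - eu ((j : ℝ) ^ 2 * β) =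
      (2 * Real.pi * Complex.I * β) * ((2 * (j : ℂ) + 1) * eu (((j : ℝ) + 1) ^ 2 * β)) -
      eu (((j : ℝ) + 1) ^ 2 * β) * (Complex.exp (z j) - 1 - z j) := by
    intro j
    have e1 : eu ((j : ℝ) ^ 2 * β) = eu (((j : ℝ) + 1) ^ 2 * β) * Complex.exp (z j) := by
      have : Complex.exp (z j) = eu (-((2 * j + 1) * β)) := by
        unfold eu; congr 1; simp only [hz]; push_cast; ring
      rw [this, ← eu_add]; congr 1; ring
    rw [e1]; push_cast; simp only [hz]; ring
  have htel := Finset.sum_range_sub (fun j : ℕ => eu ((j : ℝ) ^ 2 * β)) M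
  simp only [hstep] at htel
  rw [Finset.sum_sub_distrib, ← Finset.mul_sum] at htel
  have hR : ‖∑ j ∈ Finset.range M, eu (((j : ℝ) + 1) ^ 2 * β) * (Complex.exp (z j) - 1 - z j)‖
      ≤ M * (4 * Real.pi * M * |β|) ^ 2 := by
    refine (norm_sum_le_of_le (n := fun _ => (4 * Real.pi * M * |β|) ^ 2) _ fun j hj => ?_).trans ?_
    · rw [norm_mul, norm_eu, one_mul]
      refine (Complex.norm_exp_sub_one_sub_id_le ((hzn j hj).trans hβ)).trans ?_
      have := hzn j hj
      gcongr
    · simp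
  have hW : (2 * Real.pi * Complex.I * β) * sqW M β = eu ((M : ℝ) ^ 2 * β) - eu (((0 : ℕ) : ℝ) ^ 2 * β)
      + ∑ j ∈ Finset.range M, eu (((j : ℝ) + 1) ^ 2 * β) * (Complex.exp (z j) - 1 - z j) := by
    rw [← htel]; unfold sqW; ring
  have hn : ‖(2 * Real.pi * Complex.I * β) * sqW M β‖ = 2 * Real.pi * |β| * ‖sqW M β‖ := by
    simp [abs_of_pos Real.pi_pos]
  rw [← hn, hW]
  refine (norm_add_le _ _).trans ?_
  have h2 := norm_sub_le (eu ((M : ℝ) ^ 2 * β)) (eu (((0 : ℕ) : ℝ) ^ 2 * β))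
  rw [norm_eu, norm_eu] at h2
  have : (M : ℝ) * (4 * Real.pi * M * |β|) ^ 2 = 16 * Real.pi ^ 2 * β ^ 2 * M ^ 3 := by
    rw [mul_pow, sq_abs]; ring
  linarith

lemma norm_partial_sum_le_of_periodic {q : ℕ} (hq : 0 < q) (ψ : ℕ → ℂ)
    (hper : ∀ j, ψ (j + q) = ψ j) (hsum : ∑ j ∈ Finset.range q, ψ j = 0) {c : ℝ} (hc : 0 ≤ c)
    (hψ : ∀ j, ‖ψ j‖ ≤ c) (m : ℕ) : ‖∑ j ∈ Finset.range m, ψ j‖ ≤ c * q := by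
  induction m using Nat.strong_induction_on with
  | _ m ih =>
    rcases lt_or_ge m q with h | h
    · refine (norm_sum_le_of_le (n := fun _ => c) _ fun j _ => hψ j).trans ?_
      rw [Finset.sum_const, Finset.card_range, nsmul_eq_mul, mul_comm]
      have : (m : ℝ) ≤ q := by exact_mod_cast h.le
      gcongr
    · obtain ⟨k, rfl⟩ := Nat.exists_eq_add_of_le h
      rw [Finset.sum_range_add, hsum, zero_add]
      have : ∀ j, ψ (q + j) = ψ j := fun j => by rw [add_comm, hper]
      simp only [this]
      exact ih k (by omega)

lemma norm_sqW_rat_add_le {M : ℕ} (hM : 1 ≤ M) (x : ℚ) (β : ℝ) :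
    ‖sqW M (x + β)‖ ≤ Real.sqrt (2 / x.den) * ‖sqW M β‖ +
      x.den * (8 * M + 16 * Real.pi * |β| * M ^ 3) := by
  set q := x.den with hq
  have hq0 : 0 < q := x.den_pos
  have hqR : (0 : ℝ) < q := by exact_mod_cast hq0
  have hM1 : (1 : ℝ) ≤ M := by exact_mod_cast hM
  set φ : ℕ → ℂ := fun j => eu (((j : ℝ) + 1) ^ 2 * x) with hφ
  set G := ∑ r ∈ Finset.range q, φ r with hG
  have hG2 : ‖G‖ ^ 2 ≤ 2 * q := norm_sum_eu_sq_le x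
  have hGq : ‖G / q‖ ≤ Real.sqrt (2 / q) := by
    apply Real.le_sqrt_of_sq_le
    rw [norm_div, div_pow, Complex.norm_natCast, div_le_div_iff₀ (by positivity) hqR]
    nlinarith
  have hG1 : ‖G / q‖ ≤ 1 := by
    rw [norm_div, Complex.norm_natCast, div_le_one hqR]
    refine (norm_sum_le_of_le (n := fun _ => (1 : ℝ)) _ fun j _ => (norm_eu _).le).trans ?_
    simp
  set f : ℕ → ℂ := fun j => (2 * (j : ℂ) + 1) * eu (((j : ℝ) + 1) ^ 2 * β) with hf
  have hsplit : sqW M (x + β) = G / q * sqW M β + ∑ j ∈ Finset.range M, f j * (φ j - G / q) := by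
    unfold sqW
    rw [Finset.mul_sum, ← Finset.sum_add_distrib]
    refine Finset.sum_congr rfl fun j _ => ?_
    rw [mul_add, eu_add]; simp only [hf, hφ]; ring
  have hper : ∀ j, φ (j + q) - G / q = φ j - G / q := by
    intro j
    congr 1
    have hx : (x : ℝ) * q = x.num := by exact_mod_cast Rat.mul_den_eq_num x
    have : (((j + q : ℕ) : ℝ) + 1) ^ 2 * x =
        ((j : ℝ) + 1) ^ 2 * x + ((x.num * (2 * (j + 1) + q) : ℤ) : ℝ) := by
      push_cast; rw [← hx]; ring
    simp only [hφ]
    rw [this, eu_add_int]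
  have hsum : ∑ j ∈ Finset.range q, (φ j - G / q) = 0 := by
    rw [Finset.sum_sub_distrib, Finset.sum_const, Finset.card_range, nsmul_eq_mul, ← hG]
    have : (q : ℂ) ≠ 0 := by exact_mod_cast hq0.ne'
    field_simp
    ring
  have hbd : ∀ j, ‖φ j - G / q‖ ≤ 2 := fun j => by
    refine (norm_sub_le _ _).trans ?_
    have : ‖φ j‖ = 1 := norm_eu _
    linarith
  have hF : ‖f (M - 1)‖ ≤ 2 * M := by
    simp only [hf]
    rw [norm_mul, norm_eu, mul_one, norm_two_mul_add_one, Nat.cast_sub hM]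
    push_cast; linarith
  have hV : ∀ i, i + 1 < M → ‖f (i + 1) - f i‖ ≤ 2 + 8 * Real.pi * |β| * M ^ 2 := by
    intro i hi
    have hi' : (i : ℝ) + 2 ≤ M := by exact_mod_cast hi
    have : f (i + 1) - f i = 2 * eu (((i + 1 : ℕ) + 1 : ℝ) ^ 2 * β) +
        (2 * (i : ℂ) + 1) * (eu (((i + 1 : ℕ) + 1 : ℝ) ^ 2 * β) - eu (((i : ℝ) + 1) ^ 2 * β)) := by
      simp only [hf]; push_cast; ring
    rw [this]
    refine (norm_add_le _ _).trans ?_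
    rw [norm_mul, norm_mul, norm_eu, norm_two_mul_add_one, Complex.norm_ofNat, mul_one]
    have h1 := norm_eu_sub_eu_le (((i + 1 : ℕ) + 1 : ℝ) ^ 2 * β) (((i : ℝ) + 1) ^ 2 * β)
    have h2 : |((i + 1 : ℕ) + 1 : ℝ) ^ 2 * β - ((i : ℝ) + 1) ^ 2 * β| = (2 * i + 3) * |β| := by
      rw [show ((i + 1 : ℕ) + 1 : ℝ) ^ 2 * β - ((i : ℝ) + 1) ^ 2 * β = (2 * i + 3) * β by
        push_cast; ring, abs_mul, abs_of_pos (by positivity)]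
    rw [h2] at h1
    have h3 : (2 * (i : ℝ) + 1) * (2 * i + 3) ≤ 4 * (M : ℝ) ^ 2 := by nlinarith
    calc _ ≤ 2 + (2 * (i : ℝ) + 1) * (2 * Real.pi * ((2 * i + 3) * |β|)) := by gcongr
      _ = 2 + (2 * Real.pi * |β|) * ((2 * (i : ℝ) + 1) * (2 * i + 3)) := by ring
      _ ≤ 2 + (2 * Real.pi * |β|) * (4 * (M : ℝ) ^ 2) := by
        have := Real.pi_pos
        gcongr
      _ = _ := by ring
  have hpi := Real.pi_pos
  have herr := norm_sum_mul_le_of_partial_sums f (fun j => φ j - G / q) M (S := 2 * q)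
    (by positivity) (fun m _ => norm_partial_sum_le_of_periodic hq0 _ hper hsum zero_le_two hbd m)
    hF hV (by positivity)
  rw [hsplit]
  refine (norm_add_le _ _).trans ?_
  rw [norm_mul]
  have h1 : ‖G / q‖ * ‖sqW M β‖ ≤ Real.sqrt (2 / q) * ‖sqW M β‖ := by gcongr
  have h2 : 2 * (q : ℝ) * (2 * M + M * (2 + 8 * Real.pi * |β| * M ^ 2)) =
      q * (8 * M + 16 * Real.pi * |β| * M ^ 3) := by ring
  linarith

/-- The `h < M` for which `2hγ` is within `L/M` of an integer. -/
noncomputable def nearIntegers (M L : ℕ) (γ : ℝ) : Finset ℕ := by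
  classical exact (Finset.range M).filter fun h =>
    |2 * (h : ℝ) * γ - round (2 * (h : ℝ) * γ)| ≤ L / M

lemma mem_nearIntegers {M L : ℕ} {γ : ℝ} {h : ℕ} : h ∈ nearIntegers M L γ ↔
    h < M ∧ |2 * (h : ℝ) * γ - round (2 * (h : ℝ) * γ)| ≤ L / M := by
  classical
  rw [nearIntegers, Finset.mem_filter, Finset.mem_range]

lemma norm_sum_eu_sq_le_of_nearIntegers {M L : ℕ} (hM : 1 ≤ M) (hL : 1 ≤ L) (γ : ℝ)
    (hD : L * (nearIntegers M L γ).card ≤ M) {n : ℕ} (hn : n ≤ M) :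
    ‖∑ j ∈ Finset.range n, eu (((j : ℝ) + 1) ^ 2 * γ)‖ ^ 2 ≤ 3 * (M : ℝ) ^ 2 / L := by
  classical
  have hMR : (0 : ℝ) < M := by exact_mod_cast hM
  have hLR : (0 : ℝ) < L := by exact_mod_cast hL
  refine (norm_sum_sq_le_sum_differences _ n).trans ?_
  have hterm : ∀ h ∈ Finset.range n,
      ‖∑ m ∈ Finset.range (n - h), eu ((((h + m : ℕ) : ℝ) + 1) ^ 2 * γ) *
        (starRingEnd ℂ) (eu (((m : ℝ) + 1) ^ 2 * γ))‖ ≤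
      (if h ∈ nearIntegers M L γ then (M : ℝ) else 0) + M / (2 * L) := by
    intro h hh
    have hhn := Finset.mem_range.1 hh
    have e1 : ∀ m ∈ Finset.range (n - h), eu ((((h + m : ℕ) : ℝ) + 1) ^ 2 * γ) *
        (starRingEnd ℂ) (eu (((m : ℝ) + 1) ^ 2 * γ)) =
        eu (((h : ℝ) ^ 2 + 2 * h) * γ) * eu (2 * h * γ) ^ m := by
      intro m _
      rw [conj_eu, ← eu_nat_mul, ← eu_add, ← eu_add]
      congr 1; push_cast; ring
    rw [Finset.sum_congr rfl e1, ← Finset.mul_sum, norm_mul, norm_eu, one_mul]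
    by_cases hmem : h ∈ nearIntegers M L γ
    · rw [if_pos hmem]
      have : ‖∑ m ∈ Finset.range (n - h), eu (2 * h * γ) ^ m‖ ≤ M := by
        refine (norm_sum_le_of_le (n := fun _ => (1 : ℝ)) _ fun m _ => ?_).trans ?_
        · rw [norm_pow, norm_eu, one_pow]
        · simp only [Finset.sum_const, Finset.card_range, nsmul_eq_mul, mul_one]
          exact_mod_cast (Nat.sub_le _ _).trans hn
      have : (0 : ℝ) ≤ M / (2 * L) := by positivity
      linarith
    · rw [if_neg hmem, zero_add]
      rw [mem_nearIntegers, not_and, not_le] at hmem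
      have h2 := norm_geom_sum_eu_le (2 * h * γ) (n - h) (δ := L / M) (by positivity)
        (hmem (by omega)).le
      refine h2.trans (le_of_eq ?_)
      field_simp
  have hsum := Finset.sum_le_sum hterm
  rw [Finset.sum_add_distrib, ← Finset.sum_filter, Finset.sum_const, Finset.sum_const,
    nsmul_eq_mul, nsmul_eq_mul, Finset.card_range] at hsum
  have hcard : (((Finset.range n).filter fun h => h ∈ nearIntegers M L γ).card : ℝ) ≤ M / L := by
    rw [le_div_iff₀ hLR]
    have : ((Finset.range n).filter fun h => h ∈ nearIntegers M L γ).card ≤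
        (nearIntegers M L γ).card := Finset.card_le_card fun a ha => (Finset.mem_filter.1 ha).2
    have h3 : ((nearIntegers M L γ).card : ℝ) * L ≤ M := by rw [mul_comm]; exact_mod_cast hD
    refine le_trans ?_ h3
    gcongr
  have hnM : (n : ℝ) ≤ M := by exact_mod_cast hn
  have h4 : (((Finset.range n).filter fun h => h ∈ nearIntegers M L γ).card : ℝ) * M ≤
      M / L * M := by gcongr
  have h5 : (n : ℝ) * (M / (2 * L)) ≤ M * (M / (2 * L)) := by gcongr
  have h6 : 2 * ((M : ℝ) / L * M + M * (M / (2 * L))) = 3 * (M : ℝ) ^ 2 / L := by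
    field_simp; ring
  linarith

lemma norm_sqW_le_of_nearIntegers {M L : ℕ} (hM : 1 ≤ M) (hL : 1 ≤ L) (γ : ℝ)
    (hD : L * (nearIntegers M L γ).card ≤ M) :
    ‖sqW M γ‖ ≤ 7 * ((M : ℝ) ^ 2 / Real.sqrt L) := by
  have hMR : (1 : ℝ) ≤ M := by exact_mod_cast hM
  have hLR : (0 : ℝ) < L := by exact_mod_cast hL
  have hs : 0 < Real.sqrt L := Real.sqrt_pos.2 hLR
  have hS : ∀ m ≤ M, ‖∑ j ∈ Finset.range m, eu (((j : ℝ) + 1) ^ 2 * γ)‖ ≤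
      7 / 4 * (M / Real.sqrt L) := by
    intro m hm
    refine abs_le_of_sq_le_sq' ?_ (by positivity) |>.2
    refine (norm_sum_eu_sq_le_of_nearIntegers hM hL γ hD hm).trans ?_
    rw [mul_pow, div_pow (M : ℝ), Real.sq_sqrt hLR.le, mul_div_assoc]
    gcongr
    norm_num
  have h := norm_sum_mul_le_of_partial_sums (fun j => 2 * (j : ℂ) + 1)
    (fun j => eu (((j : ℝ) + 1) ^ 2 * γ)) M (F := 2 * M) (V := 2) (by positivity) hS ?_ ?_
    zero_le_two
  · refine h.trans (le_of_eq ?_)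
    ring
  · rw [norm_two_mul_add_one, Nat.cast_sub hM]; push_cast; linarith
  · intro i _
    have : (2 * ((i + 1 : ℕ) : ℂ) + 1) - (2 * (i : ℂ) + 1) = 2 := by push_cast; ring
    rw [this]; simp

lemma exists_near_integer_of_mem {M L : ℕ} {γ : ℝ} {a b : ℕ} (ha : a ∈ nearIntegers M L γ)
    (hb : b ∈ nearIntegers M L γ) (hab : a ≤ b) :
    ∃ z : ℤ, |2 * ((b - a : ℕ) : ℝ) * γ - z| ≤ 2 * (L / M) := by
  have h1 := (mem_nearIntegers.1 ha).2
  have h2 := (mem_nearIntegers.1 hb).2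
  refine ⟨round (2 * (b : ℝ) * γ) - round (2 * (a : ℝ) * γ), ?_⟩
  rw [Nat.cast_sub hab]
  push_cast
  rw [abs_le] at *
  constructor <;> linarith [h1.1, h1.2, h2.1, h2.2]

lemma exists_rat_approx {M L : ℕ} (hL : 2 ≤ L) (hM : 16 * L ^ 8 ≤ M) (γ : ℝ)
    (hD : M < L * (nearIntegers M L γ).card) :
    ∃ x : ℚ, x.den ≤ 4 * L ∧ |γ - x| ≤ 1 / ((L : ℝ) ^ 3 * M) := by
  have hsub : nearIntegers M L γ ⊆ Finset.range M := fun h hh =>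
    Finset.mem_range.2 (mem_nearIntegers.1 hh).1
  have hL1 : 1 ≤ L := by omega
  have hp7 : 1 ≤ L ^ 7 := Nat.one_le_pow _ _ hL1
  have hML : 2 * L ≤ M := by nlinarith [pow_succ L 7]
  obtain ⟨a₁, ha₁, b₁, hb₁, h₁, h₁'⟩ := exists_pair_of_card_lt (Y := 2 * L) (t := 1) (by omega)
    hsub (by
      have := Nat.mul_div_le M (2 * L)
      nlinarith)
  obtain ⟨a₂, ha₂, b₂, hb₂, h₂, h₂'⟩ := exists_pair_of_card_lt (Y := L ^ 6) (t := L ^ 4)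
    (by positivity) hsub (by
      have h6 := Nat.mul_div_le M (L ^ 6)
      have h5 : 2 * L ^ 5 ≤ M := by
        have : L ^ 5 ≤ L ^ 8 := Nat.pow_le_pow_right hL1 (by norm_num)
        omega
      have h7 : 2 * (L * (M / L ^ 6 * L ^ 4)) ≤ M := by
        calc 2 * (L * (M / L ^ 6 * L ^ 4)) ≤ L * (L * (M / L ^ 6 * L ^ 4)) := by gcongr
          _ = L ^ 6 * (M / L ^ 6) := by ring
          _ ≤ M := h6
      have h8 : L * ((M / L ^ 6 + 1) * L ^ 4) = L * (M / L ^ 6 * L ^ 4) + L ^ 5 := by ring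
      have : L * ((M / L ^ 6 + 1) * L ^ 4) < L * (nearIntegers M L γ).card := by omega
      exact lt_of_mul_lt_mul_left this (Nat.zero_le _))
  obtain ⟨z₁, hz₁⟩ := exists_near_integer_of_mem ha₁ hb₁ (by omega)
  obtain ⟨z₂, hz₂⟩ := exists_near_integer_of_mem ha₂ hb₂ (by omega)
  obtain ⟨k₁, hk₁⟩ : ∃ k, k = b₁ - a₁ := ⟨_, rfl⟩
  obtain ⟨k₂, hk₂⟩ : ∃ k, k = b₂ - a₂ := ⟨_, rfl⟩
  rw [← hk₁] at hz₁
  rw [← hk₂] at hz₂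
  have hk₁0 : 1 ≤ k₁ := by omega
  have hk₁1 : k₁ < 2 * L := by omega
  have hk₂0 : L ^ 4 ≤ k₂ := by omega
  have hk₂1 : k₂ ≤ L ^ 6 := by omega
  have hLR : (2 : ℝ) ≤ L := by exact_mod_cast hL
  have hMR : 16 * (L : ℝ) ^ 8 ≤ M := by exact_mod_cast hM
  have hM0 : (0 : ℝ) < M := lt_of_lt_of_le (by positivity) hMR
  have hk₁R : (1 : ℝ) ≤ k₁ := by exact_mod_cast hk₁0
  have hk₁L : (k₁ : ℝ) ≤ (L : ℝ) ^ 6 := by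
    have : (k₁ : ℝ) ≤ 2 * L := by exact_mod_cast hk₁1.le
    have h5 : (2 : ℝ) ≤ (L : ℝ) ^ 5 := by
      have := pow_le_pow_left₀ zero_le_two hLR 5
      linarith
    nlinarith [pow_succ (L : ℝ) 5]
  have hk₂R : (L : ℝ) ^ 4 ≤ k₂ := by exact_mod_cast hk₂0
  have hk₂L : (k₂ : ℝ) ≤ (L : ℝ) ^ 6 := by exact_mod_cast hk₂1
  have hL4 : (0 : ℝ) < (L : ℝ) ^ 4 := by positivity
  have hk₂pos : (0 : ℝ) < k₂ := lt_of_lt_of_le hL4 hk₂R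
  have hcross : (k₂ : ℤ) * z₁ = k₁ * z₂ := by
    have hlt : |((2 * (k₂ * z₁ - k₁ * z₂) : ℤ) : ℝ)| < 1 := by
      have e : ((2 * (k₂ * z₁ - k₁ * z₂) : ℤ) : ℝ) =
          2 * k₁ * (2 * k₂ * γ - z₂) - 2 * k₂ * (2 * k₁ * γ - z₁) := by push_cast; ring
      rw [e]
      refine (abs_sub _ _).trans_lt ?_
      rw [abs_mul (2 * (k₁ : ℝ)), abs_mul (2 * (k₂ : ℝ)), abs_of_pos (by positivity : (0 : ℝ) < 2 * k₁),
        abs_of_pos (by positivity : (0 : ℝ) < 2 * k₂)]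
      have h1 : 2 * (k₁ : ℝ) * |2 * k₂ * γ - z₂| ≤ 2 * (L : ℝ) ^ 6 * (2 * (L / M)) := by gcongr
      have h2 : 2 * (k₂ : ℝ) * |2 * k₁ * γ - z₁| ≤ 2 * (L : ℝ) ^ 6 * (2 * (L / M)) := by gcongr
      have h3 : 2 * (L : ℝ) ^ 6 * (2 * (L / M)) = 4 * (L : ℝ) ^ 7 / M := by ring
      have h4 : 4 * (L : ℝ) ^ 7 / M < 1 / 2 := by
        rw [div_lt_iff₀ hM0]
        have : (0 : ℝ) < (L : ℝ) ^ 7 := by positivity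
        nlinarith [pow_succ (L : ℝ) 7]
      linarith
    rw [← Int.cast_abs] at hlt
    have h0 : |2 * ((k₂ : ℤ) * z₁ - k₁ * z₂)| < 1 := by exact_mod_cast hlt
    have := Int.abs_lt_one_iff.1 h0
    omega
  refine ⟨(z₁ : ℚ) / ((2 * k₁ : ℕ) : ℤ), ?_, ?_⟩
  · have := Int.le_of_dvd (by positivity) (Rat.den_dvd z₁ ((2 * k₁ : ℕ) : ℤ))
    have : ((z₁ : ℚ) / ((2 * k₁ : ℕ) : ℤ)).den ≤ 2 * k₁ := by exact_mod_cast this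
    omega
  · have hcR : (k₂ : ℝ) * z₁ = k₁ * z₂ := by exact_mod_cast hcross
    have e : γ - (((z₁ : ℚ) / ((2 * k₁ : ℕ) : ℤ) : ℚ) : ℝ) = (2 * k₂ * γ - z₂) / (2 * k₂) := by
      push_cast
      have : (z₁ : ℝ) / (2 * k₁) = z₂ / (2 * k₂) := by
        rw [div_eq_div_iff (by positivity) (by positivity)]; linarith
      rw [this]
      field_simp
    rw [e, abs_div, abs_of_pos (by positivity : (0 : ℝ) < 2 * k₂), div_le_iff₀ (by positivity)]
    refine hz₂.trans ?_
    rw [div_mul_eq_mul_div, one_mul, mul_div_assoc', div_le_div_iff₀ hM0 (by positivity)]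
    have : 2 * (L : ℝ) * ((L : ℝ) ^ 3 * M) = 2 * (L : ℝ) ^ 4 * M := by ring
    rw [this]
    gcongr

/-- A majorant, up to small errors, of the Weyl sum near `0`. -/
noncomputable def weylMajorant (M : ℕ) (β : ℝ) : ℝ :=
  (M : ℝ) ^ 2 * Real.sqrt (2 / (1 + ((M : ℝ) ^ 2 * β) ^ 2))

lemma weylMajorant_nonneg (M : ℕ) (β : ℝ) : 0 ≤ weylMajorant M β := by
  unfold weylMajorant; positivity

lemma continuous_weylMajorant (M : ℕ) : Continuous (weylMajorant M) := by
  unfold weylMajorant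
  refine continuous_const.mul (Real.continuous_sqrt.comp (continuous_const.div (by fun_prop) ?_))
  intro β
  positivity

lemma weylMajorant_sq (M : ℕ) (β : ℝ) :
    weylMajorant M β ^ 2 = 2 * (M : ℝ) ^ 4 * (1 + ((M : ℝ) ^ 2 * β) ^ 2)⁻¹ := by
  unfold weylMajorant
  rw [mul_pow, Real.sq_sqrt (by positivity)]
  field_simp

lemma norm_sqW_le_inv_add {M : ℕ} {β : ℝ} (hβ0 : β ≠ 0) (hβ : 4 * Real.pi * M * |β| ≤ 1) :
    ‖sqW M β‖ ≤ 1 / (3 * |β|) + 26 * |β| * M ^ 3 := by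
  have h := norm_sqW_mul_le M β hβ
  have hb : 0 < |β| := abs_pos.2 hβ0
  have hpi := Real.pi_pos
  have h1 : ‖sqW M β‖ ≤ (2 + 16 * Real.pi ^ 2 * β ^ 2 * M ^ 3) / (2 * Real.pi * |β|) := by
    rw [le_div_iff₀ (by positivity)]; linarith
  refine h1.trans ?_
  rw [← sq_abs β]
  have e : (2 + 16 * Real.pi ^ 2 * |β| ^ 2 * M ^ 3) / (2 * Real.pi * |β|) =
      1 / (Real.pi * |β|) + 8 * Real.pi * |β| * M ^ 3 := by
    field_simp; ring
  rw [e]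
  have h3 := Real.pi_gt_three
  have h4 := Real.pi_lt_d2
  gcongr
  linarith

lemma norm_sqW_le_weylMajorant_add {M : ℕ} {β : ℝ} (hβ : 4 * Real.pi * M * |β| ≤ 1) :
    ‖sqW M β‖ ≤ weylMajorant M β + 26 * |β| * M ^ 3 := by
  rcases le_or_gt ((M : ℝ) ^ 2 * |β|) 1 with h | h
  · have h1 : (M : ℝ) ^ 2 ≤ weylMajorant M β := by
      unfold weylMajorant
      refine le_mul_of_one_le_right (by positivity) ?_
      rw [Real.one_le_sqrt, one_le_div (by positivity), ← sq_abs, abs_mul,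
        abs_of_nonneg (by positivity : (0 : ℝ) ≤ (M : ℝ) ^ 2)]
      have := pow_le_one₀ (n := 2) (by positivity : (0 : ℝ) ≤ (M : ℝ) ^ 2 * |β|) h
      linarith
    have := norm_sqW_le M β
    have : (0 : ℝ) ≤ 26 * |β| * M ^ 3 := by positivity
    linarith
  · have hb0 : β ≠ 0 := by rintro rfl; norm_num at h
    have hb : 0 < |β| := abs_pos.2 hb0
    refine (norm_sqW_le_inv_add hb0 hβ).trans ?_
    gcongr
    refine abs_le_of_sq_le_sq' ?_ (weylMajorant_nonneg _ _) |>.2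
    have hM : (0 : ℝ) < (M : ℝ) ^ 2 := by
      by_contra! hc
      nlinarith
    rw [weylMajorant_sq, div_pow, one_pow, mul_pow, ← sq_abs ((M : ℝ) ^ 2 * β), abs_mul,
      abs_of_pos hM, ← div_eq_mul_inv, div_le_div_iff₀ (by positivity) (by positivity)]
    have h2 : 1 ≤ ((M : ℝ) ^ 2 * |β|) ^ 2 := one_le_pow₀ h.le
    nlinarith

/-- Outside the major arcs the Weyl sum is small; on the major arcs it is controlled by
`weylMajorant`. -/
lemma norm_sqW_major_minor {M L N : ℕ} (hL : 204 ≤ L) (hM : 16 * L ^ 8 ≤ M) (hN0 : 0 < N)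
    (hN : N ≤ 9 * M ^ 2) {γ : ℝ} (hγ : γ ∈ Set.Ioc (0 : ℝ) 1) :
    ‖sqW M γ‖ ≤ 11 * ((M : ℝ) ^ 2 / Real.sqrt L) ∨
    ∃ x : ℚ, x.den ≤ 4 * L ∧ 0 < x ∧ x ≤ 1 ∧ γ ∈ majorArcQ x N (9 * L) ∧
      ‖sqW M γ‖ ≤ 11 * ((M : ℝ) ^ 2 / Real.sqrt L) +
        Real.sqrt (2 / x.den) * weylMajorant M (γ - x - round (γ - x)) := by
  have hL1 : (204 : ℝ) ≤ L := by exact_mod_cast hL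
  have hMR : 16 * (L : ℝ) ^ 8 ≤ M := by exact_mod_cast hM
  have hL0 : (0 : ℝ) < L := by linarith
  have hM0 : (0 : ℝ) < M := lt_of_lt_of_le (by positivity) hMR
  have hM1 : 1 ≤ M := by exact_mod_cast hM0
  have hs : 0 < Real.sqrt L := Real.sqrt_pos.2 hL0
  have hE : 0 ≤ (M : ℝ) ^ 2 / Real.sqrt L := by positivity
  rcases le_or_gt (L * (nearIntegers M L γ).card) M with hD | hD
  · left
    have := norm_sqW_le_of_nearIntegers hM1 (by omega) γ hD
    linarith
  obtain ⟨x', hden, hx'⟩ := exists_rat_approx (by omega) hM γ hD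
  obtain ⟨k, hk⟩ : ∃ k : ℤ, k = ⌈x'⌉ - 1 := ⟨_, rfl⟩
  obtain ⟨x, hx⟩ : ∃ x : ℚ, x = x' - k := ⟨_, rfl⟩
  have hxden : x.den ≤ 4 * L := by rw [hx, Rat.sub_intCast_den]; exact hden
  have hx0 : 0 < x := by
    have := Int.ceil_lt_add_one x'
    rw [hx, hk]; push_cast; linarith
  have hx1 : x ≤ 1 := by
    have := Int.le_ceil x'
    rw [hx, hk]; push_cast; linarith
  set β := γ - x - round (γ - x) with hβdef
  have hβ : |β| ≤ 1 / ((L : ℝ) ^ 3 * M) := by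
    refine (round_le (γ - (x : ℝ)) k).trans (le_of_eq_of_le ?_ hx')
    rw [hx]; push_cast; congr 1; ring
  have hβM : |β| * ((L : ℝ) ^ 3 * M) ≤ 1 := by
    rwa [le_div_iff₀ (by positivity)] at hβ
  have hq0 : (1 : ℝ) ≤ x.den := by exact_mod_cast x.den_pos
  have hqL : (x.den : ℝ) ≤ 4 * L := by exact_mod_cast hxden
  have hpi4 : Real.pi < 4 := by linarith [Real.pi_lt_d2]
  have hpi := Real.pi_pos
  have hL2 : (204 : ℝ) ^ 3 ≤ (L : ℝ) ^ 3 := by gcongr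
  have hsmall : 4 * Real.pi * M * |β| ≤ 1 := by
    have h0 : 0 ≤ |β| * M := by positivity
    nlinarith
  have hsqrtL : (M : ℝ) ^ 2 / L ≤ (M : ℝ) ^ 2 / Real.sqrt L := by
    gcongr
    rw [Real.sqrt_le_left hL0.le]
    nlinarith
  have herr1 : (x.den : ℝ) * (8 * M + 16 * Real.pi * |β| * M ^ 3) ≤ 2 * ((M : ℝ) ^ 2 / L) := by
    have h1 : 16 * Real.pi * |β| * (M : ℝ) ^ 3 * (L : ℝ) ^ 3 ≤ 51 * (M : ℝ) ^ 2 := by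
      have h3 : 16 * Real.pi ≤ 51 := by linarith [Real.pi_lt_d2]
      calc 16 * Real.pi * |β| * (M : ℝ) ^ 3 * (L : ℝ) ^ 3
          = 16 * Real.pi * (|β| * ((L : ℝ) ^ 3 * M)) * (M : ℝ) ^ 2 := by ring
        _ ≤ 51 * 1 * (M : ℝ) ^ 2 := by gcongr
        _ = _ := by ring
    have h2 : (x.den : ℝ) * (8 * M + 16 * Real.pi * |β| * M ^ 3) ≤
        4 * L * (8 * M + 51 * M ^ 2 / L ^ 3) := by
      have : 16 * Real.pi * |β| * M ^ 3 ≤ 51 * M ^ 2 / (L : ℝ) ^ 3 := by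
        rw [le_div_iff₀ (by positivity)]; exact h1
      gcongr
    refine h2.trans ?_
    have h5 : 32 * (L : ℝ) * M ≤ (M : ℝ) ^ 2 / L := by
      rw [le_div_iff₀ hL0]
      have : 32 * (L : ℝ) ^ 2 ≤ M := by
        refine le_trans ?_ hMR
        have : (2 : ℝ) ≤ (L : ℝ) ^ 6 := by
          calc (2 : ℝ) ≤ 204 ^ 6 := by norm_num
            _ ≤ (L : ℝ) ^ 6 := by gcongr
        nlinarith [sq_nonneg (L : ℝ), pow_add (L : ℝ) 2 6]
      nlinarith
    have h6 : 4 * (L : ℝ) * (51 * (M : ℝ) ^ 2 / (L : ℝ) ^ 3) ≤ (M : ℝ) ^ 2 / L := by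
      have h8 : 4 * (L : ℝ) * (51 * (M : ℝ) ^ 2 / (L : ℝ) ^ 3) =
          204 / L * ((M : ℝ) ^ 2 / L) := by
        field_simp; norm_num
      rw [h8]
      exact mul_le_of_le_one_left (by positivity) ((div_le_one hL0).2 hL1)
    calc 4 * (L : ℝ) * (8 * M + 51 * (M : ℝ) ^ 2 / (L : ℝ) ^ 3)
        = 32 * L * M + 4 * L * (51 * (M : ℝ) ^ 2 / (L : ℝ) ^ 3) := by ring
      _ ≤ _ := by linarith
  have herr2 : 26 * |β| * M ^ 3 ≤ (M : ℝ) ^ 2 / L := by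
    rw [le_div_iff₀ hL0]
    have : 26 * (L : ℝ) ≤ L ^ 3 := by nlinarith [sq_nonneg (L : ℝ)]
    calc 26 * |β| * M ^ 3 * L = |β| * M ^ 3 * (26 * L) := by ring
      _ ≤ |β| * M ^ 3 * L ^ 3 := by gcongr
      _ = |β| * (L ^ 3 * M) * M ^ 2 := by ring
      _ ≤ 1 * M ^ 2 := by gcongr
      _ = _ := one_mul _
  have hsq2 : Real.sqrt (2 / x.den) ≤ 2 := by
    rw [Real.sqrt_le_left zero_le_two, div_le_iff₀ (by linarith)]; nlinarith
  have hW : ‖sqW M γ‖ ≤ Real.sqrt (2 / x.den) * ‖sqW M β‖ + 2 * ((M : ℝ) ^ 2 / L) := by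
    have h1 := norm_sqW_rat_add_le hM1 x β
    have h2 : sqW M γ = sqW M (x + β) := by
      rw [← sqW_add_int M (x + β) (round (γ - x))]; congr 1; rw [hβdef]; ring
    rw [h2]; linarith
  by_cases harc : |β| ≤ 9 * L / (x.den * N)
  · right
    refine ⟨x, hxden, hx0, hx1, ⟨hγ, harc⟩, hW.trans ?_⟩
    have h1 := norm_sqW_le_weylMajorant_add hsmall
    have h2 : Real.sqrt (2 / x.den) * ‖sqW M β‖ ≤ Real.sqrt (2 / x.den) * weylMajorant M β +
        2 * ((M : ℝ) ^ 2 / L) := by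
      calc _ ≤ Real.sqrt (2 / x.den) * (weylMajorant M β + 26 * |β| * M ^ 3) := by gcongr
        _ = Real.sqrt (2 / x.den) * weylMajorant M β +
          Real.sqrt (2 / x.den) * (26 * |β| * M ^ 3) := by ring
        _ ≤ _ := by gcongr
    linarith
  · left
    rw [not_le] at harc
    have hNR : (0 : ℝ) < N := by exact_mod_cast hN0
    have hb : 0 < |β| := lt_of_le_of_lt (by positivity) harc
    have h1 := norm_sqW_le_inv_add (abs_pos.1 hb) hsmall
    have hN9 : (N : ℝ) ≤ 9 * (M : ℝ) ^ 2 := by exact_mod_cast hN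
    have h3 : 1 / (3 * |β|) ≤ x.den * (M : ℝ) ^ 2 / (3 * L) := by
      rw [div_le_div_iff₀ (by positivity) (by positivity)]
      rw [div_lt_iff₀ (by positivity)] at harc
      have : |β| * (x.den * N) ≤ |β| * (x.den * (9 * (M : ℝ) ^ 2)) := by gcongr
      nlinarith
    have h4 : Real.sqrt (2 / x.den) * x.den ≤ 3 * Real.sqrt L := by
      refine abs_le_of_sq_le_sq' ?_ (by positivity) |>.2
      rw [mul_pow, mul_pow, Real.sq_sqrt (by positivity), Real.sq_sqrt hL0.le]
      have : 2 / (x.den : ℝ) * x.den ^ 2 = 2 * x.den := by field_simp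
      rw [this]; linarith
    have h5 : Real.sqrt (2 / x.den) * (x.den * (M : ℝ) ^ 2 / (3 * L)) ≤
        (M : ℝ) ^ 2 / Real.sqrt L := by
      calc _ = Real.sqrt (2 / x.den) * x.den * ((M : ℝ) ^ 2 / (3 * L)) := by ring
        _ ≤ 3 * Real.sqrt L * ((M : ℝ) ^ 2 / (3 * L)) := by gcongr
        _ = (M : ℝ) ^ 2 * (Real.sqrt L / L) := by field_simp
        _ = _ := by rw [Real.sqrt_div_self, div_eq_mul_inv]
    have h6 : Real.sqrt (2 / x.den) * ‖sqW M β‖ ≤ (M : ℝ) ^ 2 / Real.sqrt L +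
        2 * ((M : ℝ) ^ 2 / L) := by
      calc _ ≤ Real.sqrt (2 / x.den) * (1 / (3 * |β|) + 26 * |β| * M ^ 3) := by gcongr
        _ ≤ Real.sqrt (2 / x.den) * (x.den * (M : ℝ) ^ 2 / (3 * L) + (M : ℝ) ^ 2 / L) := by gcongr
        _ = Real.sqrt (2 / x.den) * (x.den * (M : ℝ) ^ 2 / (3 * L)) +
          Real.sqrt (2 / x.den) * ((M : ℝ) ^ 2 / L) := by ring
        _ ≤ _ := by gcongr
    linarith

lemma card_le_of_noSquareDiff {N : ℕ} {A : Finset ℕ} (hA : A ⊆ Finset.Icc 1 N)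
    (hS : NoSquareDiff A) : 2 * A.card ≤ N + 1 := by
  have hd : Disjoint A (A.image (· + 1)) := by
    rw [Finset.disjoint_left]
    intro a ha hb'
    obtain ⟨b, hb, rfl⟩ := Finset.mem_image.1 hb'
    exact hS (b + 1) ha b hb 1 one_pos rfl
  have hsub : A ∪ A.image (· + 1) ⊆ Finset.Icc 1 (N + 1) := by
    intro a ha
    rcases Finset.mem_union.1 ha with h | h
    · have := Finset.mem_Icc.1 (hA h)
      exact Finset.mem_Icc.2 ⟨this.1, by omega⟩
    · obtain ⟨b, hb, rfl⟩ := Finset.mem_image.1 h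
      have := Finset.mem_Icc.1 (hA hb)
      exact Finset.mem_Icc.2 ⟨by omega, by omega⟩
  have h := Finset.card_le_card hsub
  rw [Finset.card_union_of_disjoint hd,
    Finset.card_image_of_injective _ (add_left_injective 1), Nat.card_Icc] at h
  omega

lemma integral_eu_int_mul (k : ℤ) :
    ∫ γ in Set.Ioc (0 : ℝ) 1, eu (k * γ) = if k = 0 then 1 else 0 := by
  split_ifs with hk
  · simp [hk, eu_zero]
  · rw [← intervalIntegral.integral_of_le zero_le_one]
    have hc : (2 * Real.pi * Complex.I * k : ℂ) ≠ 0 := by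
      simp [hk, Real.pi_ne_zero]
    have h := integral_exp_mul_complex (a := 0) (b := 1) hc
    have e : ∀ γ : ℝ, eu (k * γ) = Complex.exp (2 * Real.pi * Complex.I * k * γ) := by
      intro γ
      unfold eu
      congr 1
      push_cast
      ring
    simp_rw [e]
    rw [h]
    have h1 : Complex.exp (2 * Real.pi * Complex.I * k * (1 : ℝ)) = 1 := by
      rw [Complex.exp_eq_one_iff]
      exact ⟨k, by push_cast; ring⟩
    rw [h1]
    simp

lemma continuous_eu_mul (a : ℝ) : Continuous fun γ : ℝ => eu (a * γ) :=
  continuous_eu.comp (continuous_const.mul continuous_id)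

lemma continuous_hatInd (A : Finset ℕ) : Continuous (hatInd A) :=
  continuous_finsetSum _ fun _ _ => continuous_eu_mul _

lemma integral_trigPoly_mul_conj (S T : Finset ℕ) (c d : ℕ → ℝ) (k : ℤ) :
    ∫ γ in Set.Ioc (0 : ℝ) 1, (∑ n ∈ S, (c n : ℂ) * eu (n * γ)) *
      (starRingEnd ℂ) (∑ m ∈ T, (d m : ℂ) * eu (m * γ)) * eu (k * γ) =
    ((∑ n ∈ S, ∑ m ∈ T, if (n : ℤ) + k = m then c n * d m else 0 : ℝ) : ℂ) := by
  have e : ∀ γ : ℝ, (∑ n ∈ S, (c n : ℂ) * eu (n * γ)) *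
      (starRingEnd ℂ) (∑ m ∈ T, (d m : ℂ) * eu (m * γ)) * eu (k * γ) =
      ∑ n ∈ S, ∑ m ∈ T, (c n * d m : ℂ) * eu (((n + k - m : ℤ) : ℝ) * γ) := by
    intro γ
    rw [map_sum, Finset.sum_mul_sum, Finset.sum_mul]
    refine Finset.sum_congr rfl fun n _ => ?_
    rw [Finset.sum_mul]
    refine Finset.sum_congr rfl fun m _ => ?_
    rw [map_mul, conj_eu, Complex.conj_ofReal]
    have : ((n + k - m : ℤ) : ℝ) * γ = n * γ + -(m * γ) + k * γ := by push_cast; ring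
    rw [this, eu_add, eu_add]
    ring
  simp_rw [e]
  have hi : ∀ n m : ℕ, IntegrableOn
      (fun γ : ℝ => (c n * d m : ℂ) * eu (((n + k - m : ℤ) : ℝ) * γ)) (Set.Ioc 0 1) := by
    intro n m
    exact ((continuous_const.mul (continuous_eu_mul _)).integrableOn_Icc).mono_set
      Set.Ioc_subset_Icc_self
  rw [integral_finsetSum _ fun n _ => integrable_finsetSum _ fun m _ => hi n m]
  simp only [Complex.ofReal_sum]
  refine Finset.sum_congr rfl fun n _ => ?_
  rw [integral_finsetSum _ fun m _ => hi n m]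
  refine Finset.sum_congr rfl fun m _ => ?_
  rw [integral_const_mul, integral_eu_int_mul]
  have : (n + k - m : ℤ) = 0 ↔ (n : ℤ) + k = m := sub_eq_zero
  simp only [this]
  split_ifs <;> simp

lemma integral_norm_trigPoly_sq (S : Finset ℕ) (c : ℕ → ℝ) :
    ∫ γ in Set.Ioc (0 : ℝ) 1, ‖∑ n ∈ S, (c n : ℂ) * eu (n * γ)‖ ^ 2 = ∑ n ∈ S, c n ^ 2 := by
  have h := integral_trigPoly_mul_conj S S c c 0
  have h1 : ∀ γ : ℝ, (∑ n ∈ S, (c n : ℂ) * eu (n * γ)) *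
      (starRingEnd ℂ) (∑ m ∈ S, (c m : ℂ) * eu (m * γ)) * eu ((0 : ℤ) * γ) =
      ((‖∑ n ∈ S, (c n : ℂ) * eu (n * γ)‖ ^ 2 : ℝ) : ℂ) := by
    intro γ
    rw [Complex.mul_conj']
    simp [eu_zero]
  simp_rw [h1] at h
  rw [integral_complex_ofReal] at h
  have h2 := Complex.ofReal_injective h
  rw [h2]
  refine Finset.sum_congr rfl fun n hn => ?_
  simp [hn, sq]

lemma hatInd_eq_trigPoly (A : Finset ℕ) (γ : ℝ) :
    hatInd A γ = ∑ a ∈ A, ((1 : ℝ) : ℂ) * eu (a * γ) := by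
  simp [hatInd]

lemma integral_norm_hatInd_sq (A : Finset ℕ) :
    ∫ γ in Set.Ioc (0 : ℝ) 1, ‖hatInd A γ‖ ^ 2 = A.card := by
  simp_rw [hatInd_eq_trigPoly]
  rw [integral_norm_trigPoly_sq]
  simp

/-- The Fourier transform of the balanced function of `A ⊆ [N]` with density `α`. -/
noncomputable def hatBal (A : Finset ℕ) (N : ℕ) (α : ℝ) (γ : ℝ) : ℂ :=
  hatInd A γ - (α : ℂ) * hatInd (Finset.Icc 1 N) γ

lemma continuous_hatBal (A : Finset ℕ) (N : ℕ) (α : ℝ) : Continuous (hatBal A N α) :=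
  (continuous_hatInd _).sub (continuous_const.mul (continuous_hatInd _))

lemma hatBal_eq_trigPoly {A : Finset ℕ} {N : ℕ} (hA : A ⊆ Finset.Icc 1 N) (α γ : ℝ) :
    hatBal A N α γ =
      ∑ n ∈ Finset.Icc 1 N, (((if n ∈ A then 1 else 0) - α : ℝ) : ℂ) * eu (n * γ) := by
  unfold hatBal hatInd
  rw [Finset.mul_sum]
  have : ∑ a ∈ A, eu (a * γ) = ∑ n ∈ Finset.Icc 1 N, if n ∈ A then eu (n * γ) else 0 := by
    rw [← Finset.sum_filter]
    refine Finset.sum_congr ?_ fun _ _ => rfl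
    ext a
    simp only [Finset.mem_filter]
    exact ⟨fun h => ⟨hA h, h⟩, fun h => h.2⟩
  rw [this, ← Finset.sum_sub_distrib]
  refine Finset.sum_congr rfl fun n _ => ?_
  split_ifs <;> push_cast <;> ring

lemma integral_norm_hatBal_sq {A : Finset ℕ} {N : ℕ} (hA : A ⊆ Finset.Icc 1 N) {α : ℝ}
    (hα : α * N = A.card) :
    ∫ γ in Set.Ioc (0 : ℝ) 1, ‖hatBal A N α γ‖ ^ 2 = A.card * (1 - α) := by
  simp_rw [hatBal_eq_trigPoly hA]
  rw [integral_norm_trigPoly_sq]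
  have : ∀ n ∈ Finset.Icc 1 N, ((if n ∈ A then 1 else 0) - α : ℝ) ^ 2 =
      (if n ∈ A then (1 - 2 * α) else 0) + α ^ 2 := by
    intro n _
    split_ifs <;> ring
  rw [Finset.sum_congr rfl this, Finset.sum_add_distrib, ← Finset.sum_filter,
    Finset.filter_mem_eq_inter, Finset.inter_eq_right.2 hA]
  simp only [Finset.sum_const, Nat.card_Icc, nsmul_eq_mul, Nat.add_sub_cancel]
  rw [← hα]
  ring

/-- Testing the balanced function against one square difference. -/
lemma sum_balanced_square_shift_le {A : Finset ℕ} {N : ℕ} (hA : A ⊆ Finset.Icc 1 N)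
    (hS : NoSquareDiff A) {α : ℝ} (hα : 0 ≤ α) {n : ℕ} (hn : 0 < n) (hnN : 2 * n ^ 2 ≤ N) :
    (∑ m ∈ Finset.Icc 1 N, ∑ a ∈ A,
        if (m : ℤ) + (n : ℤ) ^ 2 = a then ((if m ∈ A then 1 else 0) - α) * 1 else 0) +
      (∑ m ∈ Finset.Icc 1 N, ∑ a ∈ A,
        if (m : ℤ) + (-(n : ℤ) ^ 2) = a then ((if m ∈ A then 1 else 0) - α) * 1 else 0) ≤
    -(α * A.card) := by
  rw [Finset.sum_comm, Finset.sum_comm (s := Finset.Icc 1 N) (t := A), ← Finset.sum_add_distrib]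
  have : -(α * (A.card : ℝ)) = ∑ a ∈ A, -α := by simp [mul_comm]
  rw [this]
  refine Finset.sum_le_sum fun a ha => ?_
  have haN := Finset.mem_Icc.1 (hA ha)
  have e1 : ∀ m ∈ Finset.Icc 1 N, (if (m : ℤ) + (n : ℤ) ^ 2 = a then
      ((if m ∈ A then 1 else 0) - α) * 1 else 0) = if (m : ℤ) + (n : ℤ) ^ 2 = a then -α else 0 := by
    intro m _
    split_ifs with h1 h2
    · exact absurd (by exact_mod_cast h1.symm) (hS a ha m h2 n hn)
    · ring
    · rfl
  have e2 : ∀ m ∈ Finset.Icc 1 N, (if (m : ℤ) + (-(n : ℤ) ^ 2) = a then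
      ((if m ∈ A then 1 else 0) - α) * 1 else 0) =
      if (m : ℤ) + (-(n : ℤ) ^ 2) = a then -α else 0 := by
    intro m _
    split_ifs with h1 h2
    · exact absurd (by zify; linarith) (hS m h2 a ha n hn)
    · ring
    · rfl
  rw [Finset.sum_congr rfl e1, Finset.sum_congr rfl e2]
  have hneg : ∀ (P : ℕ → Prop) [DecidablePred P],
      ∑ m ∈ Finset.Icc 1 N, (if P m then -α else 0) ≤ 0 := by
    intro P _
    refine Finset.sum_nonpos fun m _ => ?_
    split_ifs <;> linarith
  have hone : ∀ (P : ℕ → Prop) [DecidablePred P] (m₀ : ℕ), m₀ ∈ Finset.Icc 1 N → P m₀ →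
      ∑ m ∈ Finset.Icc 1 N, (if P m then -α else 0) ≤ -α := by
    intro P _ m₀ hm hP
    rw [← Finset.add_sum_erase _ _ hm, if_pos hP]
    have : ∑ m ∈ (Finset.Icc 1 N).erase m₀, (if P m then -α else 0) ≤ 0 := by
      refine Finset.sum_nonpos fun m _ => ?_
      split_ifs <;> linarith
    linarith
  rcases le_or_gt a (n ^ 2) with h | h
  · have h1 := hone (fun m : ℕ => (m : ℤ) + (-(n : ℤ) ^ 2) = a) (a + n ^ 2)
      (Finset.mem_Icc.2 ⟨by omega, by omega⟩) (by push_cast; ring)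
    have h2 := hneg (fun m : ℕ => (m : ℤ) + (n : ℤ) ^ 2 = a)
    linarith
  · have h1 := hone (fun m : ℕ => (m : ℤ) + (n : ℤ) ^ 2 = a) (a - n ^ 2)
      (Finset.mem_Icc.2 ⟨by omega, by omega⟩) (by push_cast [h.le]; ring)
    have h2 := hneg (fun m : ℕ => (m : ℤ) + (-(n : ℤ) ^ 2) = a)
    linarith

lemma le_integral_hatBal_mul_sqW {A : Finset ℕ} {N M : ℕ} (hA : A ⊆ Finset.Icc 1 N)
    (hS : NoSquareDiff A) {α : ℝ} (hα : 0 ≤ α) (hM : 2 * M ^ 2 ≤ N) :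
    α * A.card * (M : ℝ) ^ 2 / 2 ≤
      ∫ γ in Set.Ioc (0 : ℝ) 1, ‖hatBal A N α γ‖ * ‖hatInd A γ‖ * ‖sqW M γ‖ := by
  set F : ℤ → ℝ → ℂ := fun k γ =>
    hatBal A N α γ * (starRingEnd ℂ) (hatInd A γ) * eu (k * γ) with hF
  have hFc : ∀ k, Continuous (F k) := fun k =>
    ((continuous_hatBal _ _ _).mul (Complex.continuous_conj.comp (continuous_hatInd A))).mul
      (continuous_eu_mul _)
  have hFi : ∀ k, IntegrableOn (F k) (Set.Ioc 0 1) := fun k =>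
    ((hFc k).integrableOn_Icc).mono_set Set.Ioc_subset_Icc_self
  have hI : ∀ k, ∫ γ in Set.Ioc (0 : ℝ) 1, F k γ =
      ((∑ m ∈ Finset.Icc 1 N, ∑ a ∈ A, if (m : ℤ) + k = a then
        ((if m ∈ A then 1 else 0) - α) * 1 else 0 : ℝ) : ℂ) := by
    intro k
    rw [← integral_trigPoly_mul_conj (Finset.Icc 1 N) A
      (fun m => (if m ∈ A then 1 else 0) - α) (fun _ => 1) k]
    simp only [hF, hatBal_eq_trigPoly hA, hatInd_eq_trigPoly]
  set G : ℝ → ℂ := fun γ => ∑ j ∈ Finset.range M,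
    (2 * (j : ℂ) + 1) * (F (((j + 1 : ℕ) : ℤ) ^ 2) γ + F (-((j + 1 : ℕ) : ℤ) ^ 2) γ) with hG
  have hGe : ∀ γ, G γ = hatBal A N α γ * (starRingEnd ℂ) (hatInd A γ) *
      (sqW M γ + (starRingEnd ℂ) (sqW M γ)) := by
    intro γ
    simp only [hG, hF, sqW, map_sum, ← Finset.sum_add_distrib, Finset.mul_sum]
    refine Finset.sum_congr rfl fun j _ => ?_
    rw [map_mul, conj_eu]
    have e1 : ((((j + 1 : ℕ) : ℤ) ^ 2 : ℤ) : ℝ) * γ = ((j : ℝ) + 1) ^ 2 * γ := by push_cast; ring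
    have e2 : ((-((j + 1 : ℕ) : ℤ) ^ 2 : ℤ) : ℝ) * γ = -(((j : ℝ) + 1) ^ 2 * γ) := by
      push_cast; ring
    have e3 : (starRingEnd ℂ) (2 * (j : ℂ) + 1) = 2 * (j : ℂ) + 1 := by
      simp [Complex.conj_ofNat]
    rw [e1, e2, e3]
    ring
  have hGn : ∀ γ, ‖G γ‖ ≤ 2 * (‖hatBal A N α γ‖ * ‖hatInd A γ‖ * ‖sqW M γ‖) := by
    intro γ
    rw [hGe, norm_mul, norm_mul, RCLike.norm_conj]
    have : ‖sqW M γ + (starRingEnd ℂ) (sqW M γ)‖ ≤ 2 * ‖sqW M γ‖ := by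
      refine (norm_add_le _ _).trans ?_
      rw [RCLike.norm_conj]; linarith
    calc _ ≤ ‖hatBal A N α γ‖ * ‖hatInd A γ‖ * (2 * ‖sqW M γ‖) := by gcongr
      _ = _ := by ring
  have hGint : ∃ r : ℝ, ∫ γ in Set.Ioc (0 : ℝ) 1, G γ = (r : ℂ) ∧
      r ≤ -(α * A.card * (M : ℝ) ^ 2) := by
    refine ⟨∑ j ∈ Finset.range M, (2 * (j : ℝ) + 1) *
      ((∑ m ∈ Finset.Icc 1 N, ∑ a ∈ A, if (m : ℤ) + ((j + 1 : ℕ) : ℤ) ^ 2 = a then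
        ((if m ∈ A then 1 else 0) - α) * 1 else 0) +
      (∑ m ∈ Finset.Icc 1 N, ∑ a ∈ A, if (m : ℤ) + (-((j + 1 : ℕ) : ℤ) ^ 2) = a then
        ((if m ∈ A then 1 else 0) - α) * 1 else 0)), ?_, ?_⟩
    · have hsi : ∀ j ∈ Finset.range M, Integrable (fun γ => (2 * (j : ℂ) + 1) *
          (F (((j + 1 : ℕ) : ℤ) ^ 2) γ + F (-((j + 1 : ℕ) : ℤ) ^ 2) γ))
          (volume.restrict (Set.Ioc 0 1)) :=
        fun j _ => ((hFi _).add (hFi _)).const_mul _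
      simp only [hG]
      rw [integral_finsetSum _ hsi, Complex.ofReal_sum]
      refine Finset.sum_congr rfl fun j _ => ?_
      rw [integral_const_mul, integral_add (hFi _) (hFi _), hI, hI]
      rw [Complex.ofReal_mul]
      congr 1
      · push_cast; ring
      · exact (Complex.ofReal_add _ _).symm
    · have hsum : -(α * A.card * (M : ℝ) ^ 2) =
          ∑ j ∈ Finset.range M, (2 * (j : ℝ) + 1) * -(α * A.card) := by
        rw [← Finset.sum_mul, sum_range_two_mul_add_one]; ring
      rw [hsum]
      refine Finset.sum_le_sum fun j hj => ?_
      refine mul_le_mul_of_nonneg_left ?_ (by positivity)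
      refine sum_balanced_square_shift_le hA hS hα (Nat.succ_pos j) (le_trans ?_ hM)
      have := Finset.mem_range.1 hj
      gcongr
      omega
  obtain ⟨r, hr, hr2⟩ := hGint
  have h1 : α * A.card * (M : ℝ) ^ 2 ≤ ‖∫ γ in Set.Ioc (0 : ℝ) 1, G γ‖ := by
    rw [hr, Complex.norm_real, Real.norm_eq_abs]
    exact le_trans (by linarith) (neg_le_abs r)
  have hcont : Continuous fun γ => ‖hatBal A N α γ‖ * ‖hatInd A γ‖ * ‖sqW M γ‖ :=
    ((continuous_hatBal _ _ _).norm.mul (continuous_hatInd A).norm).mul (continuous_sqW M).norm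
  have h2 : ‖∫ γ in Set.Ioc (0 : ℝ) 1, G γ‖ ≤
      ∫ γ in Set.Ioc (0 : ℝ) 1, 2 * (‖hatBal A N α γ‖ * ‖hatInd A γ‖ * ‖sqW M γ‖) := by
    refine norm_integral_le_of_norm_le ?_ (Filter.Eventually.of_forall hGn)
    exact ((continuous_const.mul hcont).integrableOn_Icc).mono_set Set.Ioc_subset_Icc_self
  rw [integral_const_mul] at h2
  linarith

lemma measurable_round_real : Measurable (round : ℝ → ℤ) := by
  have : (round : ℝ → ℤ) = fun t => ⌊t + 1 / 2⌋ := funext fun t => round_eq t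
  rw [this]
  exact Int.measurable_floor.comp (measurable_id.add_const _)

lemma measurable_sub_round (x : ℝ) :
    Measurable fun γ : ℝ => γ - x - ((round (γ - x) : ℤ) : ℝ) := by
  have h1 : Measurable fun γ : ℝ => γ - x := measurable_id.sub_const _
  have h2 : Measurable fun γ : ℝ => ((round (γ - x) : ℤ) : ℝ) :=
    (measurable_from_top (f := fun n : ℤ => (n : ℝ))).comp (measurable_round_real.comp h1)
  exact h1.sub h2

lemma measurableSet_majorArcQ (x : ℚ) (N : ℕ) (K : ℝ) : MeasurableSet (majorArcQ x N K) := by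
  have h : Measurable fun γ : ℝ => |γ - x - ((round (γ - x) : ℤ) : ℝ)| :=
    continuous_abs.measurable.comp (measurable_sub_round x)
  exact measurableSet_Ioc.inter (h measurableSet_Iic)

lemma majorArcQ_subset_Ioc (x : ℚ) (N : ℕ) (K : ℝ) : majorArcQ x N K ⊆ Set.Ioc 0 1 :=
  fun _ h => h.1

lemma self_mem_majorArcQ {x : ℚ} (hx0 : 0 < x) (hx1 : x ≤ 1) (N : ℕ) {K : ℝ} (hK : 0 ≤ K) :
    (x : ℝ) ∈ majorArcQ x N K := by
  refine ⟨⟨by exact_mod_cast hx0, by exact_mod_cast hx1⟩, ?_⟩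
  simp
  positivity

lemma integral_mul_le_sqrt_mul_sqrt {Ω : Type*} [MeasurableSpace Ω] {μ : Measure Ω} {f g : Ω → ℝ}
    (hf : 0 ≤ f) (hg : 0 ≤ g) (hf2 : MemLp f 2 μ) (hg2 : MemLp g 2 μ) :
    ∫ a, f a * g a ∂μ ≤ Real.sqrt (∫ a, f a ^ 2 ∂μ) * Real.sqrt (∫ a, g a ^ 2 ∂μ) := by
  have h := integral_mul_le_Lp_mul_Lq_of_nonneg (μ := μ) Real.HolderConjugate.two_two
    (Filter.Eventually.of_forall hf) (Filter.Eventually.of_forall hg) (by simpa using hf2)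
    (by simpa using hg2)
  simpa [Real.sqrt_eq_rpow] using h

lemma exists_mem_forall_le_two_mul {α : Type*} {s : Set α} (hs : s.Nonempty) {f : α → ℝ}
    (hf : ∀ a, 0 ≤ f a) {b : ℝ} (hb : ∀ a, f a ≤ b) : ∃ a ∈ s, ∀ t ∈ s, f t ≤ 2 * f a := by
  by_contra! hcon
  obtain ⟨a₀, ha₀⟩ := hs
  have hne : (f '' s).Nonempty := ⟨_, a₀, ha₀, rfl⟩
  have hbd : BddAbove (f '' s) := ⟨b, by rintro _ ⟨a, _, rfl⟩; exact hb a⟩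
  have hpos : 0 < sSup (f '' s) := by
    obtain ⟨t, ht, hlt⟩ := hcon a₀ ha₀
    have := le_csSup hbd ⟨t, ht, rfl⟩
    linarith [hf a₀]
  obtain ⟨_, ⟨a, ha, rfl⟩, hlt⟩ := exists_lt_of_lt_csSup hne (half_lt_self hpos)
  obtain ⟨t, ht, hlt'⟩ := hcon a ha
  have := le_csSup hbd ⟨t, ht, rfl⟩
  linarith

lemma norm_hatInd_le (A : Finset ℕ) (γ : ℝ) : ‖hatInd A γ‖ ≤ A.card := by
  refine (norm_sum_le _ _).trans ?_
  simp [norm_eu]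

lemma integral_weylMajorant_sq {M : ℕ} (hM : 0 < M) (b : ℝ) :
    Integrable (fun γ : ℝ => weylMajorant M (γ - b) ^ 2) ∧
    ∫ γ : ℝ, weylMajorant M (γ - b) ^ 2 = 2 * Real.pi * (M : ℝ) ^ 2 := by
  have hM0 : (0 : ℝ) < (M : ℝ) ^ 2 := by positivity
  simp_rw [weylMajorant_sq]
  constructor
  · exact ((integrable_inv_one_add_sq.comp_mul_left' hM0.ne').const_mul _).comp_sub_right b
  · rw [integral_const_mul,
      integral_sub_right_eq_self (fun γ : ℝ => (1 + ((M : ℝ) ^ 2 * γ) ^ 2)⁻¹) b,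
      Measure.integral_comp_mul_left (fun γ : ℝ => (1 + γ ^ 2)⁻¹), integral_univ_inv_one_add_sq,
      abs_of_pos (by positivity), smul_eq_mul]
    field_simp

lemma weylMajorant_le (M : ℕ) (β : ℝ) : weylMajorant M β ≤ 2 * (M : ℝ) ^ 2 := by
  unfold weylMajorant
  rw [mul_comm]
  gcongr
  rw [Real.sqrt_le_left zero_le_two, div_le_iff₀ (by positivity)]
  nlinarith [sq_nonneg ((M : ℝ) ^ 2 * β)]

lemma integral_weylMajorant_sub_round_sq_le {M : ℕ} (hM : 0 < M) {x : ℝ}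
    (hx : x ∈ Set.Ioc (0 : ℝ) 1) :
    ∫ γ in Set.Ioc (0 : ℝ) 1, weylMajorant M (γ - x - ((round (γ - x) : ℤ) : ℝ)) ^ 2 ≤
      6 * Real.pi * (M : ℝ) ^ 2 := by
  have hI := fun k : ℝ => integral_weylMajorant_sq hM (x + k)
  have hle : ∀ γ ∈ Set.Ioc (0 : ℝ) 1, weylMajorant M (γ - x - ((round (γ - x) : ℤ) : ℝ)) ^ 2 ≤
      weylMajorant M (γ - (x + (-1))) ^ 2 + weylMajorant M (γ - (x + 0)) ^ 2 +
        weylMajorant M (γ - (x + 1)) ^ 2 := by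
    intro γ hγ
    have hr : round (γ - x) = -1 ∨ round (γ - x) = 0 ∨ round (γ - x) = 1 := by
      have h1 : -1 ≤ round (γ - x) := by
        rw [round_eq, Int.le_floor]; push_cast; linarith [hγ.1, hx.2]
      have h2 : round (γ - x) < 2 := by
        rw [round_eq, Int.floor_lt]; push_cast; linarith [hγ.2, hx.1]
      omega
    have h0 := fun k : ℝ => sq_nonneg (weylMajorant M (γ - (x + k)))
    have e : ∀ k : ℝ, γ - x - k = γ - (x + k) := fun k => by ring
    rcases hr with h | h | h <;> rw [h, e] <;> push_cast <;>
      linarith [h0 (-1), h0 0, h0 1]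
  have hint₂ : Integrable (fun γ : ℝ => weylMajorant M (γ - (x + (-1))) ^ 2 +
      weylMajorant M (γ - (x + 0)) ^ 2) := (hI _).1.add (hI _).1
  have hint : Integrable (fun γ : ℝ => weylMajorant M (γ - (x + (-1))) ^ 2 +
      weylMajorant M (γ - (x + 0)) ^ 2 + weylMajorant M (γ - (x + 1)) ^ 2) :=
    hint₂.add (hI _).1
  calc _ ≤ ∫ γ in Set.Ioc (0 : ℝ) 1, (weylMajorant M (γ - (x + (-1))) ^ 2 +
        weylMajorant M (γ - (x + 0)) ^ 2 + weylMajorant M (γ - (x + 1)) ^ 2) := by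
        refine integral_mono_of_nonneg (Filter.Eventually.of_forall fun γ => sq_nonneg _)
          hint.integrableOn ?_
        exact (ae_restrict_iff' measurableSet_Ioc).2 (Filter.Eventually.of_forall hle)
    _ ≤ ∫ γ : ℝ, (weylMajorant M (γ - (x + (-1))) ^ 2 +
        weylMajorant M (γ - (x + 0)) ^ 2 + weylMajorant M (γ - (x + 1)) ^ 2) :=
        setIntegral_le_integral hint (Filter.Eventually.of_forall fun γ => by positivity)
    _ = _ := by
        rw [integral_add hint₂ (hI _).1, integral_add (hI _).1 (hI _).1,
          (hI _).2, (hI _).2, (hI _).2]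
        ring

/-- The rationals in `(0, 1]` of denominator at most `P`. -/
def fareyFinset (P : ℕ) : Finset ℚ :=
  ((Finset.Icc 1 P ×ˢ Finset.Icc 1 P).image fun p : ℕ × ℕ => (p.1 : ℚ) / p.2).filter
    fun x => x.den ≤ P ∧ 0 < x ∧ x ≤ 1

lemma mem_fareyFinset {P : ℕ} {x : ℚ} : x ∈ fareyFinset P ↔ x.den ≤ P ∧ 0 < x ∧ x ≤ 1 := by
  unfold fareyFinset
  rw [Finset.mem_filter]
  refine ⟨fun h => h.2, fun h => ⟨?_, h⟩⟩
  obtain ⟨hP, h0, h1⟩ := h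
  rw [Finset.mem_image]
  have hn : 0 < x.num := Rat.num_pos.2 h0
  have hcast : ((x.num.toNat : ℕ) : ℤ) = x.num := Int.toNat_of_nonneg hn.le
  have hx : (x.num.toNat : ℚ) / x.den = x := by
    have : (x.num.toNat : ℚ) = x.num := by exact_mod_cast congrArg (Int.cast : ℤ → ℚ) hcast
    rw [this]; exact Rat.num_div_den x
  have hle : x.num ≤ x.den := by
    have h2 := Rat.num_div_den x
    have hd : (0 : ℚ) < x.den := by exact_mod_cast x.den_pos
    rw [← h2, div_le_one hd] at h1
    exact_mod_cast h1
  have := x.den_pos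
  exact ⟨(x.num.toNat, x.den), Finset.mem_product.2 ⟨Finset.mem_Icc.2 ⟨by omega, by omega⟩,
    Finset.mem_Icc.2 ⟨by omega, hP⟩⟩, hx⟩

lemma card_fareyFinset_le (P : ℕ) : (fareyFinset P).card ≤ P ^ 2 := by
  refine (Finset.card_filter_le _ _).trans (Finset.card_image_le.trans ?_)
  rw [Finset.card_product, Nat.card_Icc, sq, Nat.add_sub_cancel]

lemma integrableOn_Ioc_of_continuous {f : ℝ → ℝ} (hf : Continuous f) :
    IntegrableOn f (Set.Ioc 0 1) :=
  hf.integrableOn_Icc.mono_set Set.Ioc_subset_Icc_self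

lemma memLp_two_restrict_Ioc {f : ℝ → ℝ} (hf : Continuous f) :
    MemLp f 2 (volume.restrict (Set.Ioc 0 1)) :=
  (memLp_two_iff_integrable_sq hf.aestronglyMeasurable).2
    (integrableOn_Ioc_of_continuous (hf.pow 2))

lemma integral_hatBal_mul_hatInd_le {A : Finset ℕ} {N : ℕ} (hA : A ⊆ Finset.Icc 1 N) {α : ℝ}
    (hα0 : 0 ≤ α) (hα : α * N = A.card) :
    ∫ γ in Set.Ioc (0 : ℝ) 1, ‖hatBal A N α γ‖ * ‖hatInd A γ‖ ≤ A.card := by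
  refine (integral_mul_le_sqrt_mul_sqrt (fun γ => norm_nonneg _) (fun γ => norm_nonneg _)
    (memLp_two_restrict_Ioc (continuous_hatBal A N α).norm)
    (memLp_two_restrict_Ioc (continuous_hatInd A).norm)).trans ?_
  rw [integral_norm_hatBal_sq hA hα, integral_norm_hatInd_sq]
  have hc : (0 : ℝ) ≤ A.card := by positivity
  calc _ ≤ Real.sqrt A.card * Real.sqrt A.card := by
        gcongr
        nlinarith
    _ = _ := Real.mul_self_sqrt hc

lemma setIntegral_majorArcQ_le {A : Finset ℕ} {N M : ℕ} (hM : 0 < M) (α : ℝ) {x : ℚ} (hx0 : 0 < x)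
    (hx1 : x ≤ 1) (K s : ℝ) (hs0 : 0 ≤ s) (hs : ∀ γ ∈ majorArcQ x N K, ‖hatInd A γ‖ ≤ s) :
    ∫ γ in majorArcQ x N K, ‖hatBal A N α γ‖ * ‖hatInd A γ‖ *
        weylMajorant M (γ - x - ((round (γ - x) : ℤ) : ℝ)) ≤
      s * (Real.sqrt (∫ γ in majorArcQ x N K, ‖hatBal A N α γ‖ ^ 2) * (4.5 * M)) := by
  set h : ℝ → ℝ := fun γ => weylMajorant M (γ - x - ((round (γ - x) : ℤ) : ℝ)) with hh
  have hmeas : Measurable h :=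
    (continuous_weylMajorant M).measurable.comp (measurable_sub_round x)
  have hsub := majorArcQ_subset_Ioc x N K
  have hfin : IsFiniteMeasure (volume.restrict (Set.Ioc (0 : ℝ) 1)) := inferInstance
  have hh2i : IntegrableOn (fun γ => h γ ^ 2) (Set.Ioc 0 1) := by
    refine Integrable.of_bound (hmeas.pow_const 2).aestronglyMeasurable ((2 * (M : ℝ) ^ 2) ^ 2)
      (Filter.Eventually.of_forall fun γ => ?_)
    rw [Real.norm_eq_abs, abs_of_nonneg (sq_nonneg _)]
    have := weylMajorant_nonneg M (γ - x - ((round (γ - x) : ℤ) : ℝ))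
    have := weylMajorant_le M (γ - x - ((round (γ - x) : ℤ) : ℝ))
    simp only [hh]
    gcongr
  have hL1 : MemLp h 2 (volume.restrict (majorArcQ x N K)) :=
    (memLp_two_iff_integrable_sq hmeas.aestronglyMeasurable).2 (hh2i.mono_set hsub)
  have hL2 : MemLp (fun γ => ‖hatBal A N α γ‖) 2 (volume.restrict (majorArcQ x N K)) :=
    (memLp_two_iff_integrable_sq (continuous_hatBal A N α).norm.aestronglyMeasurable).2
      ((integrableOn_Ioc_of_continuous ((continuous_hatBal A N α).norm.pow 2)).mono_set hsub)
  have hcs := integral_mul_le_sqrt_mul_sqrt (fun γ => norm_nonneg _)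
    (fun γ => weylMajorant_nonneg M _) hL2 hL1
  have hh2 : Real.sqrt (∫ γ in majorArcQ x N K, h γ ^ 2) ≤ 4.5 * M := by
    rw [Real.sqrt_le_left (by positivity)]
    have h1 : ∫ γ in majorArcQ x N K, h γ ^ 2 ≤ ∫ γ in Set.Ioc (0 : ℝ) 1, h γ ^ 2 :=
      setIntegral_mono_set hh2i (Filter.Eventually.of_forall fun γ => sq_nonneg _)
        hsub.eventuallyLE
    have h2 := integral_weylMajorant_sub_round_sq_le hM (x := (x : ℝ))
      ⟨by exact_mod_cast hx0, by exact_mod_cast hx1⟩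
    have h3 : 6 * Real.pi * (M : ℝ) ^ 2 ≤ (4.5 * M) ^ 2 := by
      rw [mul_pow]
      gcongr
      linarith [Real.pi_lt_d2]
    linarith
  have hgi : IntegrableOn (fun γ => ‖hatBal A N α γ‖ * h γ) (majorArcQ x N K) :=
    hL2.integrable_mul hL1
  calc ∫ γ in majorArcQ x N K, ‖hatBal A N α γ‖ * ‖hatInd A γ‖ * h γ
      ≤ ∫ γ in majorArcQ x N K, s * (‖hatBal A N α γ‖ * h γ) := by
        refine integral_mono_of_nonneg (Filter.Eventually.of_forall fun γ => ?_)
          (hgi.const_mul s) ?_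
        · have := weylMajorant_nonneg M (γ - x - ((round (γ - x) : ℤ) : ℝ))
          simp only [hh, Pi.zero_apply]
          positivity
        · refine (ae_restrict_iff' (measurableSet_majorArcQ x N K)).2
            (Filter.Eventually.of_forall fun γ hγ => ?_)
          have h0 := weylMajorant_nonneg M (γ - x - ((round (γ - x) : ℤ) : ℝ))
          have h1 := mul_le_mul_of_nonneg_right (hs γ hγ)
            (mul_nonneg (norm_nonneg (hatBal A N α γ)) h0)
          simp only [hh]
          linarith
    _ = s * ∫ γ in majorArcQ x N K, ‖hatBal A N α γ‖ * h γ := integral_const_mul _ _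
    _ ≤ s * (Real.sqrt (∫ γ in majorArcQ x N K, ‖hatBal A N α γ‖ ^ 2) *
          Real.sqrt (∫ γ in majorArcQ x N K, h γ ^ 2)) := by gcongr
    _ ≤ _ := by gcongr

lemma exists_large_weighted_sum {A : Finset ℕ} {N M L : ℕ} (hA : A ⊆ Finset.Icc 1 N)
    (hS : NoSquareDiff A) {α : ℝ} (hα0 : 0 ≤ α) (hα : α * N = A.card) (hL : 204 ≤ L)
    (hM : 16 * L ^ 8 ≤ M) (hN0 : 0 < N) (hMN : 2 * M ^ 2 ≤ N) (hN : N ≤ 9 * M ^ 2)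
    (hLα : 44 ≤ α * Real.sqrt L) :
    ∃ γ : ℚ → ℝ, (∀ x ∈ fareyFinset (4 * L), γ x ∈ majorArcQ x N (9 * L)) ∧
      α * A.card * M / 60 ≤ ∑ x ∈ fareyFinset (4 * L), ‖hatInd A (γ x)‖ / Real.sqrt x.den *
        Real.sqrt (∫ γ' in majorArcQ x N (9 * L), ‖hatBal A N α γ'‖ ^ 2) := by
  set X := fareyFinset (4 * L) with hX
  have hsup : ∀ x : ℚ, ∃ γ : ℝ, x ∈ X → γ ∈ majorArcQ x N (9 * L) ∧
      ∀ t ∈ majorArcQ x N (9 * L), ‖hatInd A t‖ ≤ 2 * ‖hatInd A γ‖ := by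
    intro x
    by_cases hx : x ∈ X
    · obtain ⟨_, hx0, hx1⟩ := mem_fareyFinset.1 hx
      obtain ⟨γ, hγ, hle⟩ := exists_mem_forall_le_two_mul
        ⟨_, self_mem_majorArcQ hx0 hx1 N (by positivity : (0 : ℝ) ≤ 9 * L)⟩
        (fun t => norm_nonneg (hatInd A t)) (norm_hatInd_le A)
      exact ⟨γ, fun _ => ⟨hγ, hle⟩⟩
    · exact ⟨0, fun h => absurd h hx⟩
  choose γ hγ using hsup
  refine ⟨γ, fun x hx => (hγ x hx).1, ?_⟩
  have hM0 : 0 < M := lt_of_lt_of_le (by positivity) hM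
  have hMR : (0 : ℝ) < M := by exact_mod_cast hM0
  have hs : 0 < Real.sqrt L := Real.sqrt_pos.2 (by positivity)
  set Φ : ℝ → ℝ := fun t => ‖hatBal A N α t‖ * ‖hatInd A t‖ with hΦ
  have hΦc : Continuous Φ := (continuous_hatBal A N α).norm.mul (continuous_hatInd A).norm
  have hΦ0 : ∀ t, 0 ≤ Φ t := fun t => by simp only [hΦ]; positivity
  set H : ℚ → ℝ → ℝ := fun x t => Real.sqrt (2 / x.den) *
    (Φ t * weylMajorant M (t - x - ((round (t - x) : ℤ) : ℝ))) with hH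
  have hH0 : ∀ x t, 0 ≤ H x t := fun x t => by
    have := weylMajorant_nonneg M (t - x - ((round (t - x) : ℤ) : ℝ))
    have := hΦ0 t
    simp only [hH]; positivity
  have hHi : ∀ x, IntegrableOn (H x) (Set.Ioc 0 1) := by
    intro x
    have hmeas : Measurable fun t : ℝ => weylMajorant M (t - x - ((round (t - x) : ℤ) : ℝ)) :=
      (continuous_weylMajorant M).measurable.comp (measurable_sub_round x)
    refine Integrable.const_mul ?_ _
    refine Integrable.mul_bdd (c := 2 * (M : ℝ) ^ 2) (integrableOn_Ioc_of_continuous hΦc)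
      hmeas.aestronglyMeasurable (Filter.Eventually.of_forall fun t => ?_)
    rw [Real.norm_eq_abs, abs_of_nonneg (weylMajorant_nonneg _ _)]
    exact weylMajorant_le _ _
  have hpt : ∀ t ∈ Set.Ioc (0 : ℝ) 1, Φ t * ‖sqW M t‖ ≤
      11 * ((M : ℝ) ^ 2 / Real.sqrt L) * Φ t +
        ∑ x ∈ X, (majorArcQ x N (9 * L)).indicator (H x) t := by
    intro t ht
    have hind0 : ∀ x ∈ X, 0 ≤ (majorArcQ x N (9 * L)).indicator (H x) t :=
      fun x _ => Set.indicator_nonneg (fun t _ => hH0 x t) t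
    rcases norm_sqW_major_minor hL hM hN0 hN ht with h | ⟨x, hxd, hx0, hx1, harc, h⟩
    · have h1 := Finset.sum_nonneg hind0
      have h2 := mul_le_mul_of_nonneg_left h (hΦ0 t)
      linarith
    · have hxX : x ∈ X := mem_fareyFinset.2 ⟨hxd, hx0, hx1⟩
      have h1 := Finset.single_le_sum hind0 hxX
      rw [Set.indicator_of_mem harc] at h1
      have h2 := mul_le_mul_of_nonneg_left h (hΦ0 t)
      have h3 : H x t = Φ t * (Real.sqrt (2 / x.den) *
        weylMajorant M (t - x - ((round (t - x) : ℤ) : ℝ))) := by simp only [hH]; ring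
      rw [mul_add, ← h3] at h2
      linarith
  have hindi : ∀ x ∈ X, Integrable ((majorArcQ x N (9 * L)).indicator (H x))
      (volume.restrict (Set.Ioc 0 1)) :=
    fun x _ => (hHi x).indicator (measurableSet_majorArcQ _ _ _)
  have hlow := le_integral_hatBal_mul_sqW hA hS hα0 hMN
  have hup : ∫ t in Set.Ioc (0 : ℝ) 1, Φ t * ‖sqW M t‖ ≤
      11 * ((M : ℝ) ^ 2 / Real.sqrt L) * (∫ t in Set.Ioc (0 : ℝ) 1, Φ t) +
        ∑ x ∈ X, ∫ t in majorArcQ x N (9 * L), H x t := by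
    have h1 : ∫ t in Set.Ioc (0 : ℝ) 1, Φ t * ‖sqW M t‖ ≤ ∫ t in Set.Ioc (0 : ℝ) 1,
        (11 * ((M : ℝ) ^ 2 / Real.sqrt L) * Φ t +
          ∑ x ∈ X, (majorArcQ x N (9 * L)).indicator (H x) t) := by
      refine setIntegral_mono_on (integrableOn_Ioc_of_continuous (hΦc.mul (continuous_sqW M).norm))
        (((integrableOn_Ioc_of_continuous hΦc).const_mul _).add
          (integrable_finsetSum _ hindi)) measurableSet_Ioc hpt
    refine h1.trans (le_of_eq ?_)
    rw [integral_add ((integrableOn_Ioc_of_continuous hΦc).const_mul _)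
      (integrable_finsetSum _ hindi), integral_const_mul, integral_finsetSum _ hindi]
    congr 1
    refine Finset.sum_congr rfl fun x _ => ?_
    rw [setIntegral_indicator (measurableSet_majorArcQ _ _ _),
      Set.inter_eq_right.2 (majorArcQ_subset_Ioc _ _ _)]
  have hΦI := integral_hatBal_mul_hatInd_le hA hα0 hα
  have hterm1 : 11 * ((M : ℝ) ^ 2 / Real.sqrt L) * (∫ t in Set.Ioc (0 : ℝ) 1, Φ t) ≤
      α * A.card * (M : ℝ) ^ 2 / 4 := by
    have h1 : 11 * ((M : ℝ) ^ 2 / Real.sqrt L) ≤ α * (M : ℝ) ^ 2 / 4 := by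
      rw [← mul_div_assoc, div_le_div_iff₀ hs (by norm_num)]
      nlinarith [sq_nonneg (M : ℝ)]
    calc _ ≤ α * (M : ℝ) ^ 2 / 4 * A.card :=
          mul_le_mul h1 hΦI (integral_nonneg hΦ0) (by positivity)
      _ = _ := by ring
  have hterm2 : ∀ x ∈ X, ∫ t in majorArcQ x N (9 * L), H x t ≤
      15 * M * (‖hatInd A (γ x)‖ / Real.sqrt x.den *
        Real.sqrt (∫ γ' in majorArcQ x N (9 * L), ‖hatBal A N α γ'‖ ^ 2)) := by
    intro x hx
    obtain ⟨_, hx0, hx1⟩ := mem_fareyFinset.1 hx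
    have h1 := setIntegral_majorArcQ_le hM0 α hx0 hx1 (9 * L) (2 * ‖hatInd A (γ x)‖)
      (by positivity) (hγ x hx).2
    have h2 : Real.sqrt (2 / x.den) ≤ 1.5 * (1 / Real.sqrt x.den) := by
      rw [Real.sqrt_div zero_le_two, div_eq_mul_one_div]
      gcongr
      rw [Real.sqrt_le_left (by norm_num)]
      norm_num
    set E := Real.sqrt (∫ γ' in majorArcQ x N (9 * L), ‖hatBal A N α γ'‖ ^ 2)
    have h3 : ∫ t in majorArcQ x N (9 * L), H x t ≤ Real.sqrt (2 / x.den) *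
        (2 * ‖hatInd A (γ x)‖ * (E * (4.5 * M))) := by
      simp only [hH]
      rw [integral_const_mul]
      gcongr
    refine h3.trans ?_
    have hE : 0 ≤ E := Real.sqrt_nonneg _
    calc _ ≤ 1.5 * (1 / Real.sqrt x.den) * (2 * ‖hatInd A (γ x)‖ * (E * (4.5 * M))) := by gcongr
      _ = 13.5 * (M * (‖hatInd A (γ x)‖ / Real.sqrt x.den * E)) := by ring
      _ ≤ 15 * (M * (‖hatInd A (γ x)‖ / Real.sqrt x.den * E)) := by gcongr; norm_num
      _ = _ := by ring
  have hsum := Finset.sum_le_sum hterm2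
  rw [← Finset.mul_sum] at hsum
  set T := ∑ x ∈ X, ‖hatInd A (γ x)‖ / Real.sqrt x.den *
    Real.sqrt (∫ γ' in majorArcQ x N (9 * L), ‖hatBal A N α γ'‖ ^ 2)
  have hfin : α * A.card * (M : ℝ) ^ 2 / 4 ≤ 15 * M * T := by linarith
  have h4 : (α * A.card * M / 60) * M ≤ T * M := by nlinarith
  exact le_of_mul_le_mul_right h4 hMR

lemma two_pow_log_floor_bounds {y : ℝ} (hy : 1 ≤ y) :
    (2 : ℝ) ^ Nat.log 2 ⌊y⌋₊ ≤ y ∧ y < (2 : ℝ) ^ (Nat.log 2 ⌊y⌋₊ + 1) := by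
  have h1 : ⌊y⌋₊ ≠ 0 := (Nat.floor_pos.2 hy).ne'
  constructor
  · have h2 : ((2 ^ Nat.log 2 ⌊y⌋₊ : ℕ) : ℝ) ≤ ⌊y⌋₊ := by
      exact_mod_cast Nat.pow_log_le_self 2 h1
    push_cast at h2
    exact h2.trans (Nat.floor_le (by linarith))
  · have h2 := (Nat.floor_lt (by linarith)).1 (Nat.lt_pow_succ_log_self one_lt_two ⌊y⌋₊)
    push_cast at h2
    exact h2

lemma log_floor_add_one_le {y t : ℝ} {k : ℕ} (hy : 1 ≤ y) (ht : 3 / 2 ≤ t) (hyt : y ≤ t ^ k) :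
    ((Nat.log 2 ⌊y⌋₊ + 1 : ℕ) : ℝ) ≤ (1.5 * k + 3) * Real.log t := by
  have h1 := (two_pow_log_floor_bounds hy).1.trans hyt
  have ht0 : 0 < t := by linarith
  have h2 := Real.log_le_log (by positivity) h1
  rw [Real.log_pow, Real.log_pow] at h2
  have h3 := Real.log_two_gt_d9
  have h4 : 1 / 3 ≤ Real.log t := by
    have h5 := Real.one_sub_inv_le_log_of_pos ht0
    have h6 : t⁻¹ ≤ 2 / 3 := by
      rw [inv_le_comm₀ ht0 (by norm_num)]; norm_num; linarith
    linarith
  have h7 : (0 : ℝ) ≤ Nat.log 2 ⌊y⌋₊ := by positivity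
  have h8 : (0 : ℝ) ≤ k * Real.log t := by positivity
  push_cast
  nlinarith

/-- Pigeonholing a weighted sum into dyadic ranges of `q` and `e`. -/
lemma exists_dyadic_class {ι : Type*} (X : Finset ι) (q : ι → ℕ) (s e : ι → ℝ) {P : ℕ} {a R : ℝ}
    (hP : 1 ≤ P) (ha : 0 < a) (hR : 1 ≤ R) (hX : X.card ≤ P ^ 2)
    (hq : ∀ x ∈ X, 1 ≤ q x ∧ q x ≤ P) (hs : ∀ x ∈ X, 0 ≤ s x ∧ s x ≤ a)
    (he : ∀ x ∈ X, 0 ≤ e x ∧ e x ≤ R)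
    (hsum : a / 180 ≤ ∑ x ∈ X, s x / Real.sqrt (q x) * e x) :
    ∃ Q B : ℝ, 1 ≤ Q ∧ Q ≤ 2 * P ∧ 1 / R ≤ B ∧ B ≤ 360 * (P : ℝ) ^ 2 ∧ ∃ Y ⊆ X,
      (∀ x ∈ Y, (q x : ℝ) ≤ Q ∧ 1 / B ≤ e x) ∧
      B * a * Real.sqrt Q / (1080 * ((Nat.log 2 P + 1 : ℕ) *
        (Nat.log 2 ⌊R * (360 * (P : ℝ) ^ 2)⌋₊ + 1 : ℕ))) ≤ ∑ x ∈ Y, s x := by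
  classical
  have hP0 : (0 : ℝ) < P := by exact_mod_cast hP
  set T : ℝ := 360 * (P : ℝ) ^ 2 with hT
  have hT0 : 0 < T := by positivity
  have hP1 : (1 : ℝ) ≤ (P : ℝ) ^ 2 := one_le_pow₀ (by exact_mod_cast hP)
  have hRT : 1 ≤ R * T := by nlinarith
  set n₁ := Nat.log 2 P + 1
  set n₂ := Nat.log 2 ⌊R * T⌋₊ + 1
  set Z := X.filter fun x => 1 ≤ e x * T with hZ
  set w : ι → ℝ := fun x => s x / Real.sqrt (q x) * e x
  have hw0 : ∀ x ∈ X, 0 ≤ w x := fun x hx =>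
    mul_nonneg (div_nonneg (hs x hx).1 (Real.sqrt_nonneg _)) (he x hx).1
  have hsmall : ∑ x ∈ X.filter (fun x => ¬ 1 ≤ e x * T), w x ≤ a / 360 := by
    have h1 : ∀ x ∈ X.filter (fun x => ¬ 1 ≤ e x * T), w x ≤ a / T := by
      intro x hx
      obtain ⟨hxX, hxe⟩ := Finset.mem_filter.1 hx
      have hq1 : 1 ≤ Real.sqrt (q x) := Real.one_le_sqrt.2 (by exact_mod_cast (hq x hxX).1)
      have h2 : s x / Real.sqrt (q x) ≤ a := (div_le_self (hs x hxX).1 hq1).trans (hs x hxX).2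
      have h3 : e x ≤ 1 / T := by rw [le_div_iff₀ hT0]; linarith
      calc w x ≤ a * (1 / T) := mul_le_mul h2 h3 (he x hxX).1 ha.le
        _ = _ := by ring
    refine (Finset.sum_le_card_nsmul _ _ _ h1).trans ?_
    rw [nsmul_eq_mul]
    have h4 : ((X.filter (fun x => ¬ 1 ≤ e x * T)).card : ℝ) ≤ (P : ℝ) ^ 2 := by
      exact_mod_cast (Finset.card_filter_le _ _).trans hX
    calc _ ≤ (P : ℝ) ^ 2 * (a / T) := by gcongr
      _ = _ := by rw [hT]; field_simp
  have hlarge : a / 360 ≤ ∑ x ∈ Z, w x := by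
    have := Finset.sum_filter_add_sum_filter_not X (fun x => 1 ≤ e x * T) w
    linarith
  set f : ι → ℕ × ℕ := fun x => (Nat.log 2 (q x), Nat.log 2 ⌊e x * T⌋₊) with hf
  have hmaps : ∀ x ∈ Z, f x ∈ Finset.range n₁ ×ˢ Finset.range n₂ := by
    intro x hx
    obtain ⟨hxX, hxe⟩ := Finset.mem_filter.1 hx
    refine Finset.mem_product.2 ⟨Finset.mem_range.2 ?_, Finset.mem_range.2 ?_⟩
    · change Nat.log 2 (q x) < n₁
      exact Nat.lt_succ_of_le (Nat.log_mono_right (hq x hxX).2)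
    · change Nat.log 2 ⌊e x * T⌋₊ < n₂
      refine Nat.lt_succ_of_le (Nat.log_mono_right (Nat.floor_le_floor ?_))
      exact mul_le_mul_of_nonneg_right (he x hxX).2 hT0.le
  have hn₁ : (0 : ℝ) < n₁ := by positivity
  have hn₂ : (0 : ℝ) < n₂ := by positivity
  obtain ⟨⟨i, j⟩, hij, hclass⟩ := Finset.exists_le_sum_fiber_of_maps_to_of_nsmul_le_sum
    (b := a / 360 / (n₁ * n₂)) hmaps
    ⟨(0, 0), Finset.mem_product.2 ⟨Finset.mem_range.2 (Nat.succ_pos _),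
      Finset.mem_range.2 (Nat.succ_pos _)⟩⟩ (by
      rw [Finset.card_product, Finset.card_range, Finset.card_range, nsmul_eq_mul]
      push_cast
      rw [mul_div_cancel₀ _ (by positivity)]
      exact hlarge)
  obtain ⟨hi, hj⟩ := Finset.mem_product.1 hij
  have hi' : i ≤ Nat.log 2 P := Nat.le_of_lt_succ (Finset.mem_range.1 hi)
  have hj' : j ≤ Nat.log 2 ⌊R * T⌋₊ := Nat.le_of_lt_succ (Finset.mem_range.1 hj)
  have h2i : (2 : ℝ) ^ i ≤ P := by
    have : 2 ^ i ≤ P := (Nat.pow_le_pow_right two_pos hi').trans (Nat.pow_log_le_self 2 (by omega))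
    exact_mod_cast this
  have h2j : (2 : ℝ) ^ j ≤ R * T :=
    (pow_le_pow_right₀ one_le_two hj').trans (two_pow_log_floor_bounds hRT).1
  have h2j1 : (1 : ℝ) ≤ 2 ^ j := one_le_pow₀ one_le_two
  have h2i1 : (1 : ℝ) ≤ 2 ^ i := one_le_pow₀ one_le_two
  have hY : ∀ x ∈ Z.filter (fun x => f x = (i, j)), x ∈ X ∧ (2 : ℝ) ^ i ≤ q x ∧
      (q x : ℝ) ≤ 2 ^ (i + 1) ∧ (2 : ℝ) ^ j ≤ e x * T ∧ e x * T ≤ 2 ^ (j + 1) := by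
    intro x hx
    obtain ⟨hxZ, hxf⟩ := Finset.mem_filter.1 hx
    obtain ⟨hxX, hxe⟩ := Finset.mem_filter.1 hxZ
    obtain ⟨h1, h2⟩ := Prod.mk.inj hxf
    have h3 := two_pow_log_floor_bounds hxe
    rw [h2] at h3
    have h4 : 2 ^ i ≤ q x := by
      rw [← h1]; exact Nat.pow_log_le_self 2 (by have := (hq x hxX).1; omega)
    have h5 : q x ≤ 2 ^ (i + 1) := by
      rw [← h1]; exact (Nat.lt_pow_succ_log_self one_lt_two _).le
    exact ⟨hxX, by exact_mod_cast h4, by exact_mod_cast h5, h3.1, h3.2.le⟩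
  refine ⟨2 ^ (i + 1), T / 2 ^ j, one_le_pow₀ one_le_two, ?_, ?_, ?_,
    Z.filter (fun x => f x = (i, j)), fun x hx => (hY x hx).1, fun x hx => ⟨(hY x hx).2.2.1, ?_⟩, ?_⟩
  · rw [pow_succ]; linarith
  · rw [div_le_div_iff₀ (by linarith) (by positivity)]; linarith
  · exact div_le_self hT0.le h2j1
  · rw [one_div_div, div_le_iff₀ hT0]; exact (hY x hx).2.2.2.1
  · have hterm : ∀ x ∈ Z.filter (fun x => f x = (i, j)),
        w x ≤ 3 * 2 ^ j / (T * Real.sqrt (2 ^ (i + 1))) * s x := by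
      intro x hx
      obtain ⟨hxX, h1, h2, h3, h4⟩ := hY x hx
      have hs2 : Real.sqrt (2 ^ (i + 1)) ≤ 1.5 * Real.sqrt (q x) := by
        refine (Real.sqrt_le_left (by positivity)).2 ?_
        rw [mul_pow, Real.sq_sqrt (by positivity), pow_succ]
        linarith
      have hq0 : 0 < Real.sqrt (q x) := Real.sqrt_pos.2 (by linarith)
      have hr0 : 0 < Real.sqrt ((2 : ℝ) ^ (i + 1)) := Real.sqrt_pos.2 (by positivity)
      have h5 : 1 / Real.sqrt (q x) ≤ 1.5 / Real.sqrt (2 ^ (i + 1)) := by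
        rw [div_le_div_iff₀ hq0 hr0]; linarith
      have h6 : e x ≤ 2 * 2 ^ j / T := by
        rw [le_div_iff₀ hT0]
        rw [pow_succ] at h4
        linarith
      calc w x = s x * (1 / Real.sqrt (q x) * e x) := by simp only [w]; ring
        _ ≤ s x * (1.5 / Real.sqrt (2 ^ (i + 1)) * (2 * 2 ^ j / T)) := by
          refine mul_le_mul_of_nonneg_left ?_ (hs x hxX).1
          exact mul_le_mul h5 h6 (he x hxX).1 (by positivity)
        _ = _ := by ring
    have h7 := hclass.trans (Finset.sum_le_sum hterm)
    rw [← Finset.mul_sum] at h7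
    set S := ∑ x ∈ Z.filter (fun x => f x = (i, j)), s x
    have hr0 : 0 < Real.sqrt ((2 : ℝ) ^ (i + 1)) := Real.sqrt_pos.2 (by positivity)
    have h8 : T / 2 ^ j * a * Real.sqrt (2 ^ (i + 1)) / (1080 * ((n₁ : ℝ) * n₂)) =
        T * Real.sqrt (2 ^ (i + 1)) / (3 * 2 ^ j) * (a / 360 / (n₁ * n₂)) := by
      field_simp; norm_num
    rw [h8]
    calc _ ≤ T * Real.sqrt (2 ^ (i + 1)) / (3 * 2 ^ j) *
          (3 * 2 ^ j / (T * Real.sqrt (2 ^ (i + 1))) * S) := by gcongr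
      _ = S := by field_simp

/-- The conclusion for a density so small that a single arc covers the whole circle. -/
lemma exists_arcs_of_sparse {N : ℕ} {A : Finset ℕ} (hA : A ⊆ Finset.Icc 1 N) (hN0 : 0 < N)
    {α : ℝ} (hα0 : 0 < α) (hα1 : α ≤ 2 / 3) (hα : α * N = A.card) (hlog : 1 / 3 ≤ Real.log (1 / α))
    (hsparse : (N : ℝ) ≤ α⁻¹ ^ 450) :
    ∃ B Q K : ℝ, (α ≤ B ∧ B ≤ α⁻¹ ^ 450) ∧ (α ≤ Q ∧ Q ≤ α⁻¹ ^ 450) ∧ (α ≤ K ∧ K ≤ α⁻¹ ^ 450) ∧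
      ∃ 𝓑 : Finset ℚ, (∀ x ∈ 𝓑, (x.den : ℝ) ≤ Q ∧ 0 < x ∧ x ≤ 1) ∧
        (∃ γ : ℚ → ℝ,
          (∀ x ∈ 𝓑, γ x ∈ Set.Ioc (0 : ℝ) 1 ∧
            |γ x - (x : ℝ) - round (γ x - (x : ℝ))| ≤ α⁻¹ ^ 450 / N) ∧
          B * A.card * Real.sqrt Q / (10 ^ 7 * Real.log (1 / α) ^ 2) ≤
            ∑ x ∈ 𝓑, ‖hatInd A (γ x)‖) ∧
        (∀ x ∈ 𝓑, α * A.card / (3 * B ^ 2) ≤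
          ∫ γ' in majorArcQ x N K, ‖hatBal A N α γ'‖ ^ 2) := by
  have hNR : (0 : ℝ) < N := by exact_mod_cast hN0
  have ht1 : 1 ≤ α⁻¹ ^ 450 := one_le_pow₀ ((one_le_inv₀ hα0).2 (by linarith))
  have hs1 : Real.sqrt α ≤ 1 := Real.sqrt_le_one.2 (by linarith)
  have hsα : α ≤ Real.sqrt α := by
    refine Real.le_sqrt_of_sq_le ?_
    nlinarith
  refine ⟨Real.sqrt α, 1, α⁻¹ ^ 450, ⟨hsα, hs1.trans ht1⟩, ⟨by linarith, ht1⟩,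
    ⟨by linarith, le_rfl⟩, {1}, ?_, ⟨fun _ => 1, ?_, ?_⟩, ?_⟩
  · simp
  · intro x hx
    rw [Finset.mem_singleton.1 hx]
    simp
    positivity
  · have h1 : hatInd A 1 = A.card := by
      unfold hatInd
      have : ∀ a : ℕ, eu (a : ℝ) = 1 := fun a => by exact_mod_cast eu_int a
      simp [this]
    rw [Finset.sum_singleton, h1, Complex.norm_natCast, Real.sqrt_one, mul_one,
      div_le_iff₀ (by positivity)]
    have h2 : (0 : ℝ) ≤ A.card := by positivity
    have h3 : 1 ≤ 10 ^ 7 * Real.log (1 / α) ^ 2 := by nlinarith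
    calc Real.sqrt α * A.card ≤ 1 * A.card := by gcongr
      _ = A.card * 1 := by ring
      _ ≤ _ := by gcongr
  · intro x hx
    rw [Finset.mem_singleton.1 hx]
    have harc : majorArcQ 1 N (α⁻¹ ^ 450) = Set.Ioc 0 1 := by
      refine Set.Subset.antisymm (majorArcQ_subset_Ioc _ _ _) fun γ hγ => ⟨hγ, ?_⟩
      refine (abs_sub_round _).trans ?_
      rw [le_div_iff₀ (by simp; positivity)]
      simp only [Rat.den_one, Nat.cast_one, one_mul]
      linarith
    rw [harc, integral_norm_hatBal_sq hA hα, Real.sq_sqrt hα0.le]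
    have h2 : (0 : ℝ) ≤ A.card := by positivity
    have : α * (A.card : ℝ) / (3 * α) = A.card / 3 := by field_simp
    rw [this]
    nlinarith

/-- The conclusion for a density which is large in terms of `N`. -/
lemma exists_arcs_of_dense {N : ℕ} {A : Finset ℕ} (hA : A ⊆ Finset.Icc 1 N) (hN2 : 2 ≤ N)
    (hS : NoSquareDiff A)
    {α : ℝ} (hα0 : 0 < α) (hα1 : α ≤ 2 / 3) (hα : α * N = A.card)
    (hdense : α⁻¹ ^ 450 ≤ (N : ℝ)) :
    ∃ B Q K : ℝ, (α ≤ B ∧ B ≤ α⁻¹ ^ 450) ∧ (α ≤ Q ∧ Q ≤ α⁻¹ ^ 450) ∧ (α ≤ K ∧ K ≤ α⁻¹ ^ 450) ∧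
      ∃ 𝓑 : Finset ℚ, (∀ x ∈ 𝓑, (x.den : ℝ) ≤ Q ∧ 0 < x ∧ x ≤ 1) ∧
        (∃ γ : ℚ → ℝ,
          (∀ x ∈ 𝓑, γ x ∈ Set.Ioc (0 : ℝ) 1 ∧
            |γ x - (x : ℝ) - round (γ x - (x : ℝ))| ≤ α⁻¹ ^ 450 / N) ∧
          B * A.card * Real.sqrt Q / (10 ^ 7 * Real.log (1 / α) ^ 2) ≤
            ∑ x ∈ 𝓑, ‖hatInd A (γ x)‖) ∧
        (∀ x ∈ 𝓑, α * A.card / (3 * B ^ 2) ≤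
          ∫ γ' in majorArcQ x N K, ‖hatBal A N α γ'‖ ^ 2) := by
  have hN0 : 0 < N := by omega
  have hNR : (0 : ℝ) < N := by exact_mod_cast hN0
  obtain ⟨t, ht⟩ : ∃ t : ℝ, t = α⁻¹ := ⟨_, rfl⟩
  have hαt : α * t = 1 := by rw [ht]; exact mul_inv_cancel₀ hα0.ne'
  rw [← ht] at hdense ⊢
  have ht32 : 3 / 2 ≤ t := by nlinarith
  have ht0 : 0 < t := by linarith
  have ht1 : 1 ≤ t := by linarith
  have hpow : ∀ k : ℕ, (3 / 2 : ℝ) ^ k ≤ t ^ k := fun k => by gcongr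
  have hmono : ∀ {k : ℕ}, k ≤ 450 → t ^ k ≤ t ^ 450 := fun h => pow_le_pow_right₀ ht1 h
  have hα1' : α ≤ 1 := by linarith
  have hc0 : (0 : ℝ) < A.card := by rw [← hα]; positivity
  obtain ⟨L, hLdef⟩ : ∃ L : ℕ, L = ⌈2000 * t ^ 2⌉₊ := ⟨_, rfl⟩
  have hLlow : 2000 * t ^ 2 ≤ (L : ℝ) := hLdef ▸ Nat.le_ceil _
  have hLup : 4 * (L : ℝ) ≤ t ^ 25 := by
    have h1 : (L : ℝ) < 2000 * t ^ 2 + 1 := hLdef ▸ Nat.ceil_lt_add_one (by positivity)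
    have h2 : 8004 ≤ t ^ 23 := le_trans (by norm_num) (hpow 23)
    have h3 : 1 ≤ t ^ 2 := one_le_pow₀ ht1
    have h4 : t ^ 25 = t ^ 23 * t ^ 2 := by ring
    rw [h4]
    nlinarith only [h1, h2, h3]
  have hL2000 : (2000 : ℝ) ≤ L := le_trans (by nlinarith only [ht1]) hLlow
  have hL : 204 ≤ L := by
    have : (204 : ℝ) ≤ L := by linarith
    exact_mod_cast this
  have hLα : 44 ≤ α * Real.sqrt L := by
    have h1 : 44 * t ≤ Real.sqrt L := Real.le_sqrt_of_sq_le (by nlinarith only [hLlow, sq_nonneg t])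
    calc (44 : ℝ) = α * (44 * t) := by linear_combination -44 * hαt
      _ ≤ _ := by gcongr
  obtain ⟨M, hMdef⟩ : ∃ M : ℕ, M = Nat.sqrt (N / 2) := ⟨_, rfl⟩
  have hMN : 2 * M ^ 2 ≤ N := by
    have := Nat.sqrt_le' (N / 2)
    rw [← hMdef] at this
    omega
  have hM1 : 1 ≤ M := by
    rw [hMdef]; exact Nat.sqrt_pos.2 (by omega)
  have hNM : N ≤ 9 * M ^ 2 := by
    have := Nat.lt_succ_sqrt' (N / 2)
    rw [← hMdef, Nat.succ_eq_add_one] at this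
    have h3 : N ≤ 2 * (M + 1) ^ 2 := by omega
    nlinarith only [h3, hM1]
  have hsN : 0 < Real.sqrt N := Real.sqrt_pos.2 hNR
  have hMs : Real.sqrt N ≤ 3 * M := by
    rw [Real.sqrt_le_left (by positivity)]
    have : (N : ℝ) ≤ 9 * (M : ℝ) ^ 2 := by exact_mod_cast hNM
    linarith
  have hM : 16 * L ^ 8 ≤ M := by
    have h1 : t ^ 225 ≤ Real.sqrt N := Real.le_sqrt_of_sq_le (by rw [← pow_mul]; exact hdense)
    have h2 : 48 ≤ t ^ 25 := le_trans (by norm_num) (hpow 25)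
    have h3 : (L : ℝ) ^ 8 ≤ (t ^ 25) ^ 8 := by gcongr; linarith
    have h4 : t ^ 225 = t ^ 25 * (t ^ 25) ^ 8 := by ring
    have h5 : 48 * (L : ℝ) ^ 8 ≤ t ^ 225 := by
      rw [h4]; gcongr
    have h6 : 16 * (L : ℝ) ^ 8 ≤ M := by linarith
    exact_mod_cast h6
  obtain ⟨γ, hγ, hsum⟩ := exists_large_weighted_sum hA hS hα0.le hα hL hM hN0 hMN hNM hLα
  set E : ℚ → ℝ := fun x => ∫ γ' in majorArcQ x N (9 * L), ‖hatBal A N α γ'‖ ^ 2 with hE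
  have hσ : 0 < α * Real.sqrt N := by positivity
  have hσ2 : (α * Real.sqrt N) ^ 2 = α * A.card := by
    rw [mul_pow, Real.sq_sqrt hNR.le, ← hα]; ring
  have hE0 : ∀ x, 0 ≤ E x := fun x => integral_nonneg fun _ => by positivity
  have hEle : ∀ x, E x ≤ A.card := by
    intro x
    have h1 : E x ≤ ∫ γ' in Set.Ioc (0 : ℝ) 1, ‖hatBal A N α γ'‖ ^ 2 :=
      setIntegral_mono_set (integrableOn_Ioc_of_continuous ((continuous_hatBal A N α).norm.pow 2))
        (Filter.Eventually.of_forall fun _ => by positivity)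
        (majorArcQ_subset_Ioc _ _ _).eventuallyLE
    rw [integral_norm_hatBal_sq hA hα] at h1
    exact h1.trans (mul_le_of_le_one_right hc0.le (by linarith only [hα0]))
  have hsum' : (A.card : ℝ) / 180 ≤ ∑ x ∈ fareyFinset (4 * L),
      ‖hatInd A (γ x)‖ / Real.sqrt x.den * (Real.sqrt (E x) / (α * Real.sqrt N)) := by
    have h1 : ∑ x ∈ fareyFinset (4 * L),
        ‖hatInd A (γ x)‖ / Real.sqrt x.den * (Real.sqrt (E x) / (α * Real.sqrt N)) =
        (∑ x ∈ fareyFinset (4 * L), ‖hatInd A (γ x)‖ / Real.sqrt x.den * Real.sqrt (E x)) /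
          (α * Real.sqrt N) := by
      rw [Finset.sum_div]
      exact Finset.sum_congr rfl fun x _ => by ring
    rw [h1, le_div_iff₀ hσ]
    refine le_trans ?_ hsum
    have : α * (A.card : ℝ) * Real.sqrt N ≤ α * A.card * (3 * M) := by gcongr
    linarith
  obtain ⟨Q, B, hQ1, hQ2, hB1, hB2, Y, hYX, hY, hYsum⟩ :=
    exists_dyadic_class (fareyFinset (4 * L)) (fun x => x.den) (fun x => ‖hatInd A (γ x)‖)
      (fun x => Real.sqrt (E x) / (α * Real.sqrt N)) (P := 4 * L) (a := A.card) (R := t)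
      (by omega) hc0 ht1 (card_fareyFinset_le _)
      (fun x hx => ⟨x.den_pos, (mem_fareyFinset.1 hx).1⟩)
      (fun x _ => ⟨norm_nonneg _, norm_hatInd_le _ _⟩)
      (fun x _ => ⟨by positivity, by
        rw [div_le_iff₀ hσ, Real.sqrt_le_left (by positivity), mul_pow, hσ2]
        have h1 := hEle x
        have h2 : t ^ 2 * (α * A.card) = t * A.card := by linear_combination t * A.card * hαt
        rw [h2]
        exact h1.trans (le_mul_of_one_le_left hc0.le ht1)⟩)
      hsum'
  have hB0 : 0 < B := lt_of_lt_of_le (by positivity) hB1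
  have hPt : ((4 * L : ℕ) : ℝ) ≤ t ^ 25 := by push_cast; exact hLup
  have hP1 : (1 : ℝ) ≤ ((4 * L : ℕ) : ℝ) := by push_cast; linarith
  have hTt : 360 * ((4 * L : ℕ) : ℝ) ^ 2 ≤ t ^ 65 := by
    have h1 : 360 ≤ t ^ 15 := le_trans (by norm_num) (hpow 15)
    calc _ ≤ t ^ 15 * (t ^ 25) ^ 2 := by gcongr
      _ = _ := by ring
  have hn₁ := log_floor_add_one_le hP1 ht32 hPt
  rw [Nat.floor_natCast] at hn₁
  have hn₂ := log_floor_add_one_le (y := t * (360 * ((4 * L : ℕ) : ℝ) ^ 2)) (k := 66)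
    (by nlinarith) ht32 (by
      calc _ ≤ t * t ^ 65 := by gcongr
        _ = _ := by ring)
  have hlog0 : 0 < Real.log t := Real.log_pos (by linarith)
  have hα_eq : 1 / α = t := by rw [ht, one_div]
  have hαB : α ≤ B := by
    refine le_trans (le_of_eq ?_) hB1
    rw [ht, one_div, inv_inv]
  refine ⟨B, Q, 9 * L, ⟨hαB, hB2.trans (hTt.trans (hmono (by norm_num)))⟩, ⟨by linarith, ?_⟩,
    ⟨by linarith, ?_⟩, Y, fun x hx => ⟨(hY x hx).1, (mem_fareyFinset.1 (hYX hx)).2⟩,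
    ⟨γ, fun x hx => ⟨(hγ x (hYX hx)).1, (hγ x (hYX hx)).2.trans ?_⟩, ?_⟩, fun x hx => ?_⟩
  · refine hQ2.trans (le_trans ?_ (hmono (by norm_num : 27 ≤ 450)))
    have h1 : 2 ≤ t ^ 2 := le_trans (by norm_num) (hpow 2)
    calc _ ≤ t ^ 2 * t ^ 25 := by gcongr
      _ = _ := by ring
  · refine le_trans ?_ (hmono (by norm_num : 28 ≤ 450))
    have h1 : 3 ≤ t ^ 3 := le_trans (by norm_num) (hpow 3)
    calc 9 * (L : ℝ) ≤ 3 * (4 * L) := by linarith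
      _ ≤ t ^ 3 * t ^ 25 := by gcongr
      _ = _ := by ring
  · have hd : (1 : ℝ) ≤ x.den := by exact_mod_cast x.den_pos
    have h1 : 3 ≤ t ^ 3 := le_trans (by norm_num) (hpow 3)
    have h2 : 9 * (L : ℝ) ≤ t ^ 450 := by
      calc 9 * (L : ℝ) ≤ 3 * (4 * L) := by linarith
        _ ≤ t ^ 3 * t ^ 25 := by gcongr
        _ = t ^ 28 := by ring
        _ ≤ _ := hmono (by norm_num)
    calc 9 * (L : ℝ) / (x.den * N) ≤ 9 * L / (1 * N) := by gcongr
      _ ≤ _ := by rw [one_mul]; gcongr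
  · refine le_trans ?_ hYsum
    rw [hα_eq]
    have h3 := mul_le_mul hn₁ hn₂ (Nat.cast_nonneg _) (by positivity)
    have h4 : 0 < Real.log t ^ 2 := by positivity
    refine div_le_div_of_nonneg_left (by positivity) (by positivity) ?_
    generalize ((Nat.log 2 (4 * L) + 1 : ℕ) : ℝ) *
      ((Nat.log 2 ⌊t * (360 * ((4 * L : ℕ) : ℝ) ^ 2)⌋₊ + 1 : ℕ) : ℝ) = n at h3 ⊢
    have h5 : (1.5 * ((25 : ℕ) : ℝ) + 3) * Real.log t * ((1.5 * ((66 : ℕ) : ℝ) + 3) * Real.log t) =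
        4131 * Real.log t ^ 2 := by push_cast; ring
    rw [h5] at h3
    linarith only [h3, h4]
  · have h1 := (hY x hx).2
    rw [le_div_iff₀ hσ] at h1
    have h2 : (1 / B * (α * Real.sqrt N)) ^ 2 ≤ E x := by
      calc _ ≤ Real.sqrt (E x) ^ 2 := by gcongr
        _ = E x := Real.sq_sqrt (hE0 x)
    rw [mul_pow, hσ2] at h2
    refine le_trans ?_ h2
    have h3 : (1 / B) ^ 2 * (α * A.card) = α * A.card / B ^ 2 := by field_simp
    rw [h3]
    gcongr
    linarith only [sq_nonneg B]

theorem statement_9 :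
    ∃ c > (0 : ℝ), ∃ C > (0 : ℝ), ∃ N₀ : ℕ, ∀ N : ℕ, N₀ ≤ N →
      ∀ A : Finset ℕ, A ⊆ Finset.Icc 1 N → NoSquareDiff A →
      ∀ α : ℝ, α = (A.card : ℝ) / N → (N : ℝ) ^ (-(1 / 3) : ℝ) ≤ α →
      ∃ B Q K : ℝ,
        (c * α ^ C ≤ B ∧ B ≤ C * α ^ (-C)) ∧
        (c * α ^ C ≤ Q ∧ Q ≤ C * α ^ (-C)) ∧
        (c * α ^ C ≤ K ∧ K ≤ C * α ^ (-C)) ∧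
        ∃ 𝓑 : Finset ℚ,
          (∀ x ∈ 𝓑, (x.den : ℝ) ≤ Q ∧ 0 < x ∧ x ≤ 1) ∧
          (∃ γ : ℚ → ℝ,
            (∀ x ∈ 𝓑, γ x ∈ Set.Ioc (0 : ℝ) 1 ∧
              |γ x - (x : ℝ) - round (γ x - (x : ℝ))| ≤ C * α ^ (-C) / N) ∧
            c * B * A.card * Real.sqrt Q / Real.log (1 / α) ^ 2 ≤
              ∑ x ∈ 𝓑, ‖hatInd A (γ x)‖) ∧
          (∀ x ∈ 𝓑, c * α * A.card / B ^ 2 ≤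
            ∫ γ' in majorArcQ x N K,
              ‖hatInd A γ' - (α : ℂ) * hatInd (Finset.Icc 1 N) γ'‖ ^ 2) := by
  refine ⟨1 / 10 ^ 7, by norm_num, 450, by norm_num, 3, ?_⟩
  intro N hN A hA hS α hαdef hαN
  have hN0 : 0 < N := by omega
  have hNR : (3 : ℝ) ≤ N := by exact_mod_cast hN
  have hα0 : 0 < α := lt_of_lt_of_le (Real.rpow_pos_of_pos (by linarith) _) hαN
  have hα : α * N = A.card := by
    rw [hαdef]; exact div_mul_cancel₀ _ (by linarith)
  have hα1 : α ≤ 2 / 3 := by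
    have h1 : 2 * (A.card : ℝ) ≤ N + 1 := by exact_mod_cast card_le_of_noSquareDiff hA hS
    rw [hαdef, div_le_iff₀ (by linarith)]
    linarith
  have hlog : 1 / 3 ≤ Real.log (1 / α) := by
    have := Real.one_sub_inv_le_log_of_pos (one_div_pos.2 hα0)
    rw [one_div, inv_inv] at this
    rw [one_div α]
    linarith
  have hup : α⁻¹ ^ 450 ≤ 450 * α ^ (-(450 : ℝ)) := by
    have h1 : α ^ (-(450 : ℝ)) = α⁻¹ ^ 450 := by
      rw [Real.rpow_neg hα0.le, inv_pow]
      congr 1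
      exact_mod_cast Real.rpow_natCast α 450
    rw [h1]
    have h2 : 0 ≤ α⁻¹ ^ 450 := by positivity
    linarith
  have hlow : 1 / 10 ^ 7 * α ^ (450 : ℝ) ≤ α := by
    have h1 : α ^ (450 : ℝ) ≤ α ^ (1 : ℝ) :=
      Real.rpow_le_rpow_of_exponent_ge hα0 (by linarith) (by norm_num)
    rw [Real.rpow_one] at h1
    linarith
  have hmain : ∃ B Q K : ℝ, (α ≤ B ∧ B ≤ α⁻¹ ^ 450) ∧ (α ≤ Q ∧ Q ≤ α⁻¹ ^ 450) ∧
      (α ≤ K ∧ K ≤ α⁻¹ ^ 450) ∧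
      ∃ 𝓑 : Finset ℚ, (∀ x ∈ 𝓑, (x.den : ℝ) ≤ Q ∧ 0 < x ∧ x ≤ 1) ∧
        (∃ γ : ℚ → ℝ,
          (∀ x ∈ 𝓑, γ x ∈ Set.Ioc (0 : ℝ) 1 ∧
            |γ x - (x : ℝ) - round (γ x - (x : ℝ))| ≤ α⁻¹ ^ 450 / N) ∧
          B * A.card * Real.sqrt Q / (10 ^ 7 * Real.log (1 / α) ^ 2) ≤
            ∑ x ∈ 𝓑, ‖hatInd A (γ x)‖) ∧
        (∀ x ∈ 𝓑, α * A.card / (3 * B ^ 2) ≤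
          ∫ γ' in majorArcQ x N K, ‖hatBal A N α γ'‖ ^ 2) := by
    rcases le_total (N : ℝ) (α⁻¹ ^ 450) with h | h
    · exact exists_arcs_of_sparse hA hN0 hα0 hα1 hα hlog h
    · exact exists_arcs_of_dense hA (by omega) hS hα0 hα1 hα h
  obtain ⟨B, Q, K, hB, hQ, hK, 𝓑, h𝓑, ⟨γ, hγ, hsum⟩, henergy⟩ := hmain
  have hB0 : 0 < B := hα0.trans_le hB.1
  refine ⟨B, Q, K, ⟨hlow.trans hB.1, hB.2.trans hup⟩, ⟨hlow.trans hQ.1, hQ.2.trans hup⟩,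
    ⟨hlow.trans hK.1, hK.2.trans hup⟩, 𝓑, h𝓑, ⟨γ, fun x hx => ⟨(hγ x hx).1, ?_⟩, ?_⟩,
    fun x hx => le_trans ?_ (henergy x hx)⟩
  · refine (hγ x hx).2.trans ?_
    gcongr
  · refine le_trans (le_of_eq ?_) hsum
    have : Real.log (1 / α) ≠ 0 := by linarith
    field_simp
  · have h1 : 1 / 10 ^ 7 * α * A.card / B ^ 2 = α * A.card / (10 ^ 7 * B ^ 2) := by field_simp
    rw [h1]
    gcongr
    norm_num
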